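/- arXiv:2201.00496 — 3 statements merged into one kernel-verified Lean document; each statement's English description precedes it below -/
import Mathlib

section
/- Let D be a domain of strict linear orders on a finite set A with |A| ≥ 3, and suppose D satisfies path-connectedness and leaf symmetry. Then D is a non-dictatorial domain if and only if D satisfies the unique seconds property. -/
open Classical

set_option linter.unusedSectionVars false
set_option linter.unusedVariables false

/-- A strict preference over `A`, represented as a ranking bijection:
`P k` is the `(k+1)`-th ranked alternative. -/
abbrev Pref (A : Type*) [Fintype A] := Fin (Fintype.card A) ≃ A

variable {A : Type*} [Fintype A] [DecidableEq A] [Nonempty A]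

/-- `rk P k` : the `(k+1)`-th ranked alternative of `P` (0-indexed, so `rk P 0 = r₁(P)`). -/
noncomputable def rk (P : Pref A) (k : ℕ) : A :=
  if h : k < Fintype.card A then P ⟨k, h⟩ else Classical.arbitrary A

/-- The peak `r₁(P)`. -/
noncomputable def peak (P : Pref A) : A := rk P 0

/-- The second-ranked alternative `r₂(P)`. -/
noncomputable def second (P : Pref A) : A := rk P 1

/-- `a` is strictly preferred to `b` under `P`. -/
def prefers (P : Pref A) (a b : A) : Prop := P.symm a < P.symm b

/-- Two preferences are completely reversed. -/
def Reversed (P P' : Pref A) : Prop := ∀ a b : A, prefers P a b ↔ prefers P' b a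

/-- A profile lies in the domain `D`. -/
def InDom (D : Set (Pref A)) {n : ℕ} (P : Fin n → Pref A) : Prop := ∀ i, P i ∈ D

/-- Unanimity (an SCF satisfying it is called a rule). -/
def IsRule (D : Set (Pref A)) {n : ℕ} (f : (Fin n → Pref A) → A) : Prop :=
  ∀ P : Fin n → Pref A, InDom D P → ∀ a : A, (∀ i, peak (P i) = a) → f P = a

/-- Strategy-proofness (relative to the domain `D`). -/
def StrategyProof (D : Set (Pref A)) {n : ℕ} (f : (Fin n → Pref A) → A) : Prop :=
  ∀ P : Fin n → Pref A, InDom D P → ∀ i : Fin n, ∀ Q ∈ D,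
    f P = f (Function.update P i Q) ∨ prefers (P i) (f P) (f (Function.update P i Q))

/-- The tops-only property. -/
def TopsOnly (D : Set (Pref A)) {n : ℕ} (f : (Fin n → Pref A) → A) : Prop :=
  ∀ P P' : Fin n → Pref A, InDom D P → InDom D P' →
    (∀ i, peak (P i) = peak (P' i)) → f P = f P'

/-- Anonymity. -/
def Anonymous (D : Set (Pref A)) {n : ℕ} (f : (Fin n → Pref A) → A) : Prop :=
  ∀ P : Fin n → Pref A, InDom D P → ∀ σ : Equiv.Perm (Fin n), f (P ∘ σ) = f P

/-- `f` behaves like a dictatorship on `B`. -/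
def DictatorOn (D : Set (Pref A)) {n : ℕ} (f : (Fin n → Pref A) → A) (B : Set A) : Prop :=
  ∃ i : Fin n, ∀ P : Fin n → Pref A, InDom D P → (∀ j, peak (P j) ∈ B) → f P = peak (P i)

/-- `f` is a dictatorship. -/
def Dictatorship (D : Set (Pref A)) {n : ℕ} (f : (Fin n → Pref A) → A) : Prop :=
  DictatorOn D f Set.univ

/-- A dictatorial domain. -/
def DictatorialDomain (D : Set (Pref A)) : Prop :=
  ∀ n : ℕ, 2 ≤ n → ∀ f : (Fin n → Pref A) → A,
    IsRule D f → StrategyProof D f → Dictatorship D f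

/-- A tops-only domain. -/
def TopsOnlyDomain (D : Set (Pref A)) : Prop :=
  ∀ n : ℕ, 2 ≤ n → ∀ f : (Fin n → Pref A) → A,
    IsRule D f → StrategyProof D f → TopsOnly D f

/-- Adjacency of two alternatives relative to the domain `D`. -/
def DomAdjacent (D : Set (Pref A)) (a b : A) : Prop :=
  ∃ P ∈ D, ∃ P' ∈ D, peak P = a ∧ second P = b ∧ peak P' = b ∧ second P' = a ∧
    ∀ k : ℕ, 2 ≤ k → rk P k = rk P' k

/-- The adjacency graph `G_∼` of the domain `D`. -/
noncomputable def adjGraph (D : Set (Pref A)) : SimpleGraph A :=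
  SimpleGraph.fromRel (DomAdjacent D)

/-- Path-connectedness of the domain. -/
def PathConnectedDom (D : Set (Pref A)) : Prop := (adjGraph D).Connected

/-- Diversity: the domain contains two completely reversed preferences. -/
def Diversity (D : Set (Pref A)) : Prop := ∃ P ∈ D, ∃ P' ∈ D, Reversed P P'

/-- `S(D^a)`: the set of alternatives second-ranked in some preference of `D` with peak `a`. -/
def secondsSet (D : Set (Pref A)) (a : A) : Set A := {b | ∃ P ∈ D, peak P = a ∧ second P = b}

/-- Leaf symmetry. -/
def LeafSymmetry (D : Set (Pref A)) : Prop :=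
  ∀ x : A, (∃! y, (adjGraph D).Adj x y) →
    (∃ u ∈ secondsSet D x, ∃ v ∈ secondsSet D x, u ≠ v) →
    ∃ z ∈ secondsSet D x, ¬ (adjGraph D).Adj x z ∧ x ∈ secondsSet D z

/-- Unidimensionality: path-connectedness, diversity and leaf symmetry. -/
def Unidimensional (D : Set (Pref A)) : Prop :=
  PathConnectedDom D ∧ Diversity D ∧ LeafSymmetry D

/-- The unique seconds property. -/
def UniqueSeconds (D : Set (Pref A)) : Prop := ∃ x b : A, secondsSet D x = {b}

/-- Minimal richness. -/
def MinimallyRich (D : Set (Pref A)) : Prop := ∀ a : A, ∃ P ∈ D, peak P = a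

/-- The vertex set `⟨x, y|T⟩` of the (in a tree, unique) shortest path between `x` and `y`. -/
def intv (T : SimpleGraph A) (x y : A) : Set A :=
  {z | T.dist x z + T.dist z y = T.dist x y}

/-- `a'` is the projection of `a` onto `B` in `T`. -/
def IsProjPt (T : SimpleGraph A) (B : Set A) (a a' : A) : Prop :=
  a' ∈ B ∧ ∀ b ∈ B, a' ∈ intv T a b

/-- The projection `Proj(a, B)` of `a` onto a path-closed set `B` in the tree `T`. -/
noncomputable def projOn (T : SimpleGraph A) (B : Set A) (a : A) : A :=
  if h : ∃ a', IsProjPt T B a a' then h.choose else a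

/-- `Γ(P)`: the vertex set of the minimal subtree of `T` spanning all the peaks. -/
def gammaSet (T : SimpleGraph A) {n : ℕ} (P : Fin n → Pref A) : Set A :=
  {c | ∃ i j : Fin n, c ∈ intv T (peak (P i)) (peak (P j))}

/-- The projection rule on `T` w.r.t. `xbar`. -/
noncomputable def projRule (T : SimpleGraph A) (xbar : A) {n : ℕ}
    (P : Fin n → Pref A) : A :=
  projOn T (gammaSet T P) xbar

/-- Single-peakedness on a tree. -/
def SinglePeaked (T : SimpleGraph A) (P : Pref A) : Prop :=
  ∀ c d : A, c ≠ d → c ∈ intv T (peak P) d → prefers P c d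

/-- Semi-single-peakedness on `T` w.r.t. the threshold `xbar`. -/
def SemiSP (T : SimpleGraph A) (xbar : A) (P : Pref A) : Prop :=
  (∀ c d : A, c ∈ intv T (peak P) xbar → d ∈ intv T (peak P) xbar → c ≠ d →
    c ∈ intv T (peak P) d → prefers P c d) ∧
  (∀ c : A, c ∉ intv T (peak P) xbar →
    prefers P (projOn T (intv T (peak P) xbar) c) c)

/-- A semi-single-peaked domain. -/
def SemiSPDomain (D : Set (Pref A)) : Prop :=
  ∃ (T : SimpleGraph A) (xbar : A), T.IsTree ∧
    D ⊆ {P | SemiSP T xbar P} ∧ (adjGraph D).Connected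

/-- `A^{a⇀b}`: the alternatives whose path to `b` goes through `a`. -/
def sideSet (T : SimpleGraph A) (a b : A) : Set A := {z | a ∈ intv T z b}

/-- `x = max^P(B)`: `x` is `P`'s best alternative of `B`. -/
def IsBestOf (P : Pref A) (x : A) (B : Set A) : Prop :=
  x ∈ B ∧ ∀ y ∈ B, y ≠ x → prefers P x y

/-- `a` and `b` are dual-thresholds in the tree `T`. -/
def DualThresholds (T : SimpleGraph A) (a b : A) : Prop :=
  a ≠ b ∧ ∀ c : A, c ∉ intv T a b →
    projOn T (intv T a b) c = a ∨ projOn T (intv T a b) c = b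

/-- An `(a,b)`-semi-hybrid preference on `T`. -/
def SemiHybridPref (T : SimpleGraph A) (a b : A) (P : Pref A) : Prop :=
  (peak P ∈ sideSet T a b \ {a} → SemiSP T a P ∧ IsBestOf P b (sideSet T b a)) ∧
  (peak P ∈ sideSet T b a \ {b} → SemiSP T b P ∧ IsBestOf P a (sideSet T a b)) ∧
  (peak P ∈ intv T a b → IsBestOf P a (sideSet T a b) ∧ IsBestOf P b (sideSet T b a))

/-- `x` is a leaf of the subgraph of `G` induced on `B`. -/
def IsLeafOn (G : SimpleGraph A) (B : Set A) (x : A) : Prop :=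
  x ∈ B ∧ ∃! y, y ∈ B ∧ G.Adj x y

/-- `D` is an `(a,b)`-semi-hybrid domain on the tree `T`. -/
def SemiHybridDomainOn (D : Set (Pref A)) (T : SimpleGraph A) (a b : A) : Prop :=
  T.IsTree ∧ DualThresholds T a b ∧ D ⊆ {P | SemiHybridPref T a b P} ∧
  (adjGraph D).Connected ∧
  (¬ ∃ (T' : SimpleGraph A) (a' b' : A), T'.IsTree ∧ DualThresholds T' a' b' ∧
      D ⊆ {P | SemiHybridPref T' a' b' P} ∧ intv T' a' b' ⊂ intv T a b) ∧
  ((adjGraph D).IsTree →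
    ∀ x : A, IsLeafOn (adjGraph D) (intv T a b) x →
      ∃ P ∈ D, ¬ SemiSP (adjGraph D) x P)

/-- `D` is a semi-hybrid domain. -/
def SemiHybridDomain (D : Set (Pref A)) : Prop :=
  ∃ (T : SimpleGraph A) (a b : A), SemiHybridDomainOn D T a b

/-- An `(a,b)`-hybrid preference on `T`. -/
def HybridPref (T : SimpleGraph A) (a b : A) (P : Pref A) : Prop :=
  (∀ y z : A, ((y ∈ sideSet T a b ∧ z ∈ sideSet T a b) ∨
      (y ∈ sideSet T b a ∧ z ∈ sideSet T b a)) → y ≠ z →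
    y ∈ intv T (peak P) z → prefers P y z) ∧
  (peak P ∈ sideSet T a b \ {a} → IsBestOf P a (intv T a b)) ∧
  (peak P ∈ sideSet T b a \ {b} → IsBestOf P b (intv T a b))

/-- `D` is an `(a,b)`-hybrid domain on the tree `T`. -/
def HybridDomainOn (D : Set (Pref A)) (T : SimpleGraph A) (a b : A) : Prop :=
  T.IsTree ∧ DualThresholds T a b ∧ D ⊆ {P | HybridPref T a b P} ∧
  (adjGraph D).Connected ∧
  (¬ ∃ (T' : SimpleGraph A) (a' b' : A), T'.IsTree ∧ DualThresholds T' a' b' ∧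
      D ⊆ {P | HybridPref T' a' b' P} ∧ intv T' a' b' ⊂ intv T a b) ∧
  3 ≤ (intv T a b).ncard

/-- `f` is an `(a,b)`-hybrid rule on the tree `T`. -/
def IsHybridRule (D : Set (Pref A)) {n : ℕ} (f : (Fin n → Pref A) → A)
    (T : SimpleGraph A) (a b : A) : Prop :=
  T.IsTree ∧ DualThresholds T a b ∧ 3 ≤ (intv T a b).ncard ∧
  ∃ i : Fin n, ∀ P : Fin n → Pref A, InDom D P →
    (peak (P i) ∈ intv T a b → f P = peak (P i)) ∧
    (peak (P i) ∈ sideSet T a b \ {a} → f P = projOn T (gammaSet T P) a) ∧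
    (peak (P i) ∈ sideSet T b a \ {b} → f P = projOn T (gammaSet T P) b)

/-- The PNT rule on `T` w.r.t. the edge `(x, y)`, with the two distinguished voters `i, j`. -/
noncomputable def pntRule (T : SimpleGraph A) (x y : A) {n : ℕ} (i j : Fin n)
    (P : Fin n → Pref A) : A :=
  if peak (P i) ∈ sideSet T y x then peak (P i)
  else if peak (P j) ∈ sideSet T x y then projOn T (gammaSet T P) x
  else if prefers (P j) x y then x else y

/-- `(x, y)` is a critical spot in `T` for the domain `D`. -/
def CriticalSpot (D : Set (Pref A)) (T : SimpleGraph A) (x y : A) : Prop :=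
  T.Adj x y ∧
  (∀ P ∈ D, peak P ∈ sideSet T x y → SemiSP T y P) ∧
  (∀ P ∈ D, peak P ∈ sideSet T y x → IsBestOf P x (sideSet T x y)) ∧
  (∃ P ∈ D, ∃ P' ∈ D, peak P = peak P' ∧ peak P ∈ sideSet T y x ∧
    prefers P y x ∧ prefers P' x y)

/-- `x` is a path in the graph `G` (pairwise distinct, consecutive vertices adjacent). -/
def IsPathIn (G : SimpleGraph A) {v : ℕ} (x : Fin v → A) : Prop :=
  Function.Injective x ∧
  ∀ (k : ℕ) (h : k + 1 < v), G.Adj (x ⟨k, Nat.lt_of_succ_lt h⟩) (x ⟨k + 1, h⟩)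

/-- `x` is a cycle in the graph `G`. -/
def IsCycleIn (G : SimpleGraph A) {v : ℕ} (x : Fin v → A) : Prop :=
  Function.Injective x ∧
  (∀ (k : ℕ) (h : k + 1 < v), G.Adj (x ⟨k, Nat.lt_of_succ_lt h⟩) (x ⟨k + 1, h⟩)) ∧
  ∀ (h : 0 < v), G.Adj (x ⟨v - 1, Nat.sub_lt h Nat.one_pos⟩) (x ⟨0, h⟩)

/-- The line `L^A` induced by the ranking of the preference `P`. -/
noncomputable def lineOf (P : Pref A) : SimpleGraph A :=
  SimpleGraph.fromRel (fun a b =>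
    ∃ k : ℕ, k + 1 < Fintype.card A ∧ rk P k = a ∧ rk P (k + 1) = b)

/-- The median of three natural numbers. -/
def med3 (a b c : ℕ) : ℕ := max (min a b) (min (max a b) c)

/-- The two-voter profile in which voter `i` reports `Pi` and the other voter reports `Q`. -/
noncomputable def prof2 (i : Fin 2) (Pi Q : Pref A) : Fin 2 → Pref A :=
  Function.update (fun _ => Q) i Pi

/-! ### Basic facts on rankings -/

lemma xx_peak_eq (h3 : 3 ≤ Fintype.card A) (P : Pref A) : peak P = P ⟨0, by omega⟩ := by
  have h : 0 < Fintype.card A := by omega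
  simp [peak, rk, h]

lemma xx_second_eq (h3 : 3 ≤ Fintype.card A) (P : Pref A) : second P = P ⟨1, by omega⟩ := by
  have h : 1 < Fintype.card A := by omega
  simp [second, rk, h]

lemma xx_peak_ne_second (h3 : 3 ≤ Fintype.card A) (P : Pref A) : peak P ≠ second P := by
  rw [xx_peak_eq h3, xx_second_eq h3]
  intro h
  have := P.injective h
  simp at this

/-- Weak preference. -/
def wk (P : Pref A) (x y : A) : Prop := x = y ∨ prefers P x y

lemma xx_asymm (P : Pref A) (x y : A) (h : prefers P x y) : ¬ wk P y x := by
  rintro (h' | h')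
  · subst h'; exact lt_irrefl _ h
  · exact lt_asymm h h'

lemma xx_total (P : Pref A) (x y : A) (h : x ≠ y) : prefers P x y ∨ prefers P y x := by
  unfold prefers
  rcases lt_trichotomy (P.symm x) (P.symm y) with h1 | h1 | h1
  · exact Or.inl h1
  · exact absurd (P.symm.injective h1) h
  · exact Or.inr h1

lemma xx_peak_pref (h3 : 3 ≤ Fintype.card A) (P : Pref A) (x : A) (h : x ≠ peak P) :
    prefers P (peak P) x := by
  rcases xx_total P (peak P) x (Ne.symm h) with h1 | h1
  · exact h1
  · exfalso
    unfold prefers at h1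
    rw [xx_peak_eq h3, Equiv.symm_apply_apply] at h1
    exact absurd h1 (by simp [Fin.lt_def])

lemma xx_wk_peak (h3 : 3 ≤ Fintype.card A) (P : Pref A) (x : A) (h : wk P x (peak P)) :
    x = peak P := by
  by_contra hne
  exact xx_asymm P _ _ (xx_peak_pref h3 P x hne) h

lemma xx_wk_second (h3 : 3 ≤ Fintype.card A) (P : Pref A) (x : A) (h : wk P x (second P)) :
    x = peak P ∨ x = second P := by
  rcases h with h | h
  · exact Or.inr h
  · left
    unfold prefers at h
    rw [xx_second_eq h3, Equiv.symm_apply_apply, Fin.lt_def] at h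
    rw [xx_peak_eq h3, ← Equiv.symm_apply_eq]
    apply Fin.ext
    simp at h ⊢
    omega

lemma xx_swap (h3 : 3 ≤ Fintype.card A) (P P' : Pref A) (h1 : peak P = second P')
    (h2 : second P = peak P') (hr : ∀ k : ℕ, 2 ≤ k → rk P k = rk P' k) (c d : A)
    (hc : prefers P c d) (hd : prefers P' d c) : c = peak P ∧ d = second P := by
  have key : ∀ x : A, 2 ≤ (P.symm x).1 → P'.symm x = P.symm x := by
    intro x hx
    have := hr _ hx
    simp only [rk, (P.symm x).2, dif_pos, Fin.eta, Equiv.apply_symm_apply] at this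
    rw [Equiv.symm_apply_eq]; exact this
  have cases2 : ∀ x : A, x = peak P ∨ x = second P ∨ 2 ≤ (P.symm x).1 := by
    intro x
    by_cases hx : 2 ≤ (P.symm x).1
    · exact Or.inr (Or.inr hx)
    · rw [xx_peak_eq h3, xx_second_eq h3, ← Equiv.symm_apply_eq, ← Equiv.symm_apply_eq,
        Fin.ext_iff, Fin.ext_iff]
      simp only
      omega
  have p0 : (P.symm (peak P)).1 = 0 := by rw [xx_peak_eq h3]; simp
  have p1 : (P.symm (second P)).1 = 1 := by rw [xx_second_eq h3]; simp
  have q0 : (P'.symm (second P)).1 = 0 := by rw [h2, xx_peak_eq h3]; simp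
  have q1 : (P'.symm (peak P)).1 = 1 := by rw [h1, xx_second_eq h3]; simp
  unfold prefers at hc hd
  rw [Fin.lt_def] at hc hd
  rcases cases2 c with e | e | e <;> rcases cases2 d with e' | e' | e'
  · subst e; subst e'; omega
  · exact ⟨e, e'⟩
  · have := key d e'; rw [this] at hd; subst e; omega
  · subst e; subst e'; omega
  · subst e; subst e'; omega
  · have := key d e'; rw [this] at hd; subst e; omega
  · subst e'; omega
  · subst e'; omega
  · rw [key c e, key d e'] at hd; omega

/-! ### Two-voter rules -/

/-- Unanimous and strategy-proof two-voter rules, in curried form. -/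
structure Good (D : Set (Pref A)) (f : Pref A → Pref A → A) : Prop where
  un : ∀ P ∈ D, ∀ Q ∈ D, peak P = peak Q → f P Q = peak P
  sp1 : ∀ P ∈ D, ∀ P' ∈ D, ∀ Q ∈ D, wk P (f P Q) (f P' Q)
  sp2 : ∀ P ∈ D, ∀ P' ∈ D, ∀ Q ∈ D, wk P (f Q P) (f Q P')

lemma Good.flip {D : Set (Pref A)} {f : Pref A → Pref A → A} (h : Good D f) :
    Good D (fun P Q => f Q P) where
  un P hP Q hQ e := by rw [h.un Q hQ P hP e.symm, e]
  sp1 := h.sp2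
  sp2 := h.sp1

/-- Mutual seconds. -/
def HE (D : Set (Pref A)) (a b : A) : Prop := b ∈ secondsSet D a ∧ a ∈ secondsSet D b

lemma HE.symm {D : Set (Pref A)} {a b : A} (h : HE D a b) : HE D b a := ⟨h.2, h.1⟩

lemma HE.ne (h3 : 3 ≤ Fintype.card A) {D : Set (Pref A)} {a b : A} (h : HE D a b) : a ≠ b := by
  obtain ⟨P, _, rfl, rfl⟩ := h.1
  exact xx_peak_ne_second h3 P

/-- Voter 1 obtains `a` against `b`. -/
def R1 (D : Set (Pref A)) (f : Pref A → Pref A → A) (a b : A) : Prop :=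
  ∀ P ∈ D, peak P = a → ∀ Q ∈ D, peak Q = b → f P Q = a

/-- Voter 2 obtains `b` against `a`. -/
def R2 (D : Set (Pref A)) (f : Pref A → Pref A → A) (a b : A) : Prop :=
  ∀ P ∈ D, peak P = a → ∀ Q ∈ D, peak Q = b → f P Q = b

lemma xx_flip {D : Set (Pref A)} {f : Pref A → Pref A → A} {a b : A} :
    R1 D (fun P Q => f Q P) a b ↔ R2 D f b a :=
  ⟨fun h P hP e Q hQ e' => h Q hQ e' P hP e, fun h P hP e Q hQ e' => h Q hQ e' P hP e⟩

lemma xx_dich1 (h3 : 3 ≤ Fintype.card A) {D : Set (Pref A)} {f : Pref A → Pref A → A}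
    (hf : Good D f) {a b : A} {P Q : Pref A} (hP : P ∈ D) (hQ : Q ∈ D)
    (pa : peak P = a) (pb : second P = b) (qb : peak Q = b) (qa : second Q = a)
    (hfa : f P Q = a) : R1 D f a b := by
  intro P' hP' pa' Q' hQ' qb'
  have e1 : f P Q' = a := by
    have h1 := hf.sp1 P hP Q hQ Q' hQ'
    rw [hf.un Q hQ Q' hQ' (by rw [qb, qb']), qb, ← pb] at h1
    rcases xx_wk_second h3 _ _ h1 with h | h
    · rw [h, pa]
    · exfalso
      have h2 := hf.sp2 Q hQ Q' hQ' P hP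
      rw [h, hfa, pb, ← qb] at h2
      have := xx_wk_peak h3 _ _ h2
      rw [← qa] at this
      exact xx_peak_ne_second h3 Q this.symm
  have h1 := hf.sp1 P' hP' P hP Q' hQ'
  rw [e1, ← pa'] at h1
  rw [xx_wk_peak h3 _ _ h1, pa']

lemma xx_dich (h3 : 3 ≤ Fintype.card A) {D : Set (Pref A)} {f : Pref A → Pref A → A}
    (hf : Good D f) {a b : A} (h : HE D a b) : R1 D f a b ∨ R2 D f a b := by
  obtain ⟨⟨P, hP, pa, pb⟩, ⟨Q, hQ, qb, qa⟩⟩ := h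
  have h1 := hf.sp1 P hP Q hQ Q hQ
  rw [hf.un Q hQ Q hQ rfl, qb, ← pb] at h1
  rcases xx_wk_second h3 _ _ h1 with h | h
  · exact Or.inl (xx_dich1 h3 hf hP hQ pa pb qb qa (h.trans pa))
  · exact Or.inr (xx_flip.1 (xx_dich1 h3 hf.flip hQ hP qb qa pa pb (h.trans pb)))

lemma xx_not_both (h3 : 3 ≤ Fintype.card A) {D : Set (Pref A)} {f : Pref A → Pref A → A}
    {a b : A} (h : HE D a b) (h1 : R1 D f a b) (h2 : R2 D f a b) : False := by
  have hne := h.ne h3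
  obtain ⟨⟨P, hP, pa, pb⟩, ⟨Q, hQ, qb, qa⟩⟩ := h
  exact hne ((h1 P hP pa Q hQ qb).symm.trans (h2 P hP pa Q hQ qb))

lemma xx_trans (h3 : 3 ≤ Fintype.card A) {D : Set (Pref A)} {f : Pref A → Pref A → A}
    (hf : Good D f) {a b c : A} (h : HE D a b) (hab : R1 D f a b) (hbc : R1 D f b c) :
    R1 D f a c := by
  have hne := h.ne h3
  obtain ⟨⟨P, hP, pa, pb⟩, ⟨Q, hQ, qb, qa⟩⟩ := h
  intro P' hP' pa' Z hZ zc
  have e1 : f P Z = a := by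
    have h1 := hf.sp1 P hP Q hQ Z hZ
    rw [hbc Q hQ qb Z hZ zc, ← pb] at h1
    rcases xx_wk_second h3 _ _ h1 with h | h
    · rw [h, pa]
    · exfalso
      have h2 := hf.sp2 Q hQ Z hZ P hP
      rw [h, hab P hP pa Q hQ qb, pb, ← qb] at h2
      have := xx_wk_peak h3 _ _ h2
      exact hne (this.trans qb)
  have h1 := hf.sp1 P' hP' P hP Z hZ
  rw [e1, ← pa'] at h1
  rw [xx_wk_peak h3 _ _ h1, pa']

lemma xx_adj {D : Set (Pref A)} {a b : A} (h : (adjGraph D).Adj a b) :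
    ∃ P ∈ D, ∃ P' ∈ D, peak P = a ∧ second P = b ∧ peak P' = b ∧ second P' = a ∧
    ∀ k : ℕ, 2 ≤ k → rk P k = rk P' k := by
  rw [adjGraph, SimpleGraph.fromRel_adj] at h
  rcases h with ⟨_, h | ⟨P, hP, P', hP', h1, h2, h3, h4, h5⟩⟩
  · exact h
  · exact ⟨P', hP', P, hP, h3, h4, h1, h2, fun k hk => (h5 k hk).symm⟩

lemma xx_adj_HE {D : Set (Pref A)} {a b : A} (h : (adjGraph D).Adj a b) : HE D a b := by
  obtain ⟨P, hP, P', hP', h1, h2, h3, h4, h5⟩ := xx_adj h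
  exact ⟨⟨P, hP, h1, h2⟩, ⟨P', hP', h3, h4⟩⟩

/-- Propagation, first edge an adjacency. -/
lemma xx_T (h3 : 3 ≤ Fintype.card A) {D : Set (Pref A)} {f : Pref A → Pref A → A}
    (hf : Good D f) {a b c : A} (hab : (adjGraph D).Adj a b) (hbc : HE D b c) (hac : a ≠ c)
    (h : R1 D f a b) : R1 D f b c := by
  rcases xx_dich h3 hf hbc with h' | h'
  · exact h'
  · exfalso
    have hbcne := hbc.ne h3
    obtain ⟨P, hP, P', hP', h1, h2, h4, h5, h6⟩ := xx_adj hab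
    obtain ⟨⟨S, hS, sb, sc⟩, ⟨Q, hQ, qc, qb⟩⟩ := hbc
    have e1 : f P' Q = c := h' P' hP' h4 Q hQ qc
    have e2 : f P Q = c := by
      by_contra hne
      have g1 := hf.sp1 P hP P' hP' Q hQ
      have g2 := hf.sp1 P' hP' P hP Q hQ
      rw [e1] at g1 g2
      rcases g1 with g1 | g1
      · exact hne g1
      rcases g2 with g2 | g2
      · exact hne g2.symm
      have := xx_swap h3 P P' (by rw [h1, h5]) (by rw [h2, h4]) h6 _ _ g1 g2
      exact hbcne (by rw [this.2, h2])
    have g := hf.sp2 S hS Q hQ P hP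
    rw [e2, h P hP h1 S hS sb, ← sc] at g
    rcases xx_wk_second h3 _ _ g with g | g
    · exact hab.ne (g.trans sb)
    · exact hac (g.trans sc)

/-- Propagation, second edge an adjacency. -/
lemma xx_T' (h3 : 3 ≤ Fintype.card A) {D : Set (Pref A)} {f : Pref A → Pref A → A}
    (hf : Good D f) {a b c : A} (hab : HE D a b) (hbc : (adjGraph D).Adj b c) (hac : a ≠ c)
    (h : R1 D f a b) : R1 D f b c := by
  rcases xx_dich h3 hf (xx_adj_HE hbc) with h' | h'
  · exact h'
  · exfalso
    have := xx_T h3 hf.flip hbc.symm hab.symm hac.symm (xx_flip.2 h')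
    exact xx_not_both h3 hab h (xx_flip.1 this)

/-- Dominating edges. -/
def Dom (D : Set (Pref A)) (f : Pref A → Pref A → A) (a b : A) : Prop :=
  HE D a b ∧ R1 D f a b ∧ R2 D f b a

lemma xx_dom_step (h3 : 3 ≤ Fintype.card A) {D : Set (Pref A)} {f : Pref A → Pref A → A}
    (hf : Good D f) (hG : ∀ x, ∃ y, (adjGraph D).Adj x y)
    (hH : ∀ x a, ∃ y, y ≠ a ∧ HE D x y) {a b : A} (h : Dom D f a b) :
    ∃ c, Dom D f b c := by
  obtain ⟨hab, h1, h2⟩ := h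
  by_cases hadj : (adjGraph D).Adj a b
  · obtain ⟨c, hc, hbc⟩ := hH b a
    refine ⟨c, hbc, xx_T h3 hf hadj hbc hc.symm h1, ?_⟩
    rcases xx_dich h3 hf hbc.symm with g | g
    · exact (xx_not_both h3 hab.symm (xx_T' h3 hf hbc.symm hadj.symm hc g) h2).elim
    · exact g
  · obtain ⟨c, hbc⟩ := hG b
    have hc : c ≠ a := by rintro rfl; exact hadj hbc.symm
    refine ⟨c, xx_adj_HE hbc, xx_T' h3 hf hab hbc hc.symm h1, ?_⟩
    rcases xx_dich h3 hf (xx_adj_HE hbc).symm with g | g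
    · exact (xx_not_both h3 hab.symm (xx_T h3 hf hbc.symm hab.symm hc g) h2).elim
    · exact g

lemma xx_no_dom (h3 : 3 ≤ Fintype.card A) {D : Set (Pref A)} {f : Pref A → Pref A → A}
    (hf : Good D f) (hG : ∀ x, ∃ y, (adjGraph D).Adj x y)
    (hH : ∀ x a, ∃ y, y ≠ a ∧ HE D x y) {a b : A} (h : Dom D f a b) : False := by
  have step : ∀ p : {p : A × A // Dom D f p.1 p.2}, ∃ q : {p : A × A // Dom D f p.1 p.2},
      q.1.1 = p.1.2 := by
    rintro ⟨⟨x, y⟩, hxy⟩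
    obtain ⟨c, hc⟩ := xx_dom_step h3 hf hG hH hxy
    exact ⟨⟨(y, c), hc⟩, rfl⟩
  choose nx hnx using step
  let s : ℕ → {p : A × A // Dom D f p.1 p.2} := fun n => nx^[n] ⟨(a, b), h⟩
  have hs : ∀ n, Dom D f (s n).1.1 (s (n + 1)).1.1 := by
    intro n
    have : (s (n + 1)).1.1 = (s n).1.2 := by
      simp only [s, Function.iterate_succ_apply']
      exact hnx _
    rw [this]
    exact (s n).2
  have hwalk : ∀ k n, R1 D f (s n).1.1 (s (n + k)).1.1 := by
    intro k
    induction k with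
    | zero => intro n P hP e Q hQ e'; rw [hf.un P hP Q hQ (by rw [e, e']; rfl), e]
    | succ k ih =>
      intro n
      have := ih (n + 1)
      rw [show n + 1 + k = n + (k + 1) by omega] at this
      exact xx_trans h3 hf (hs n).1 (hs n).2.1 this
  obtain ⟨i, j, hij, he⟩ := Finite.exists_ne_map_eq_of_infinite (fun n => (s n).1.1)
  have main : ∀ i j, i < j → (s i).1.1 = (s j).1.1 → False := by
    intro i j hij he
    have h1 := hwalk (j - (i + 1)) (i + 1)
    rw [show i + 1 + (j - (i + 1)) = j by omega, ← he] at h1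
    exact xx_not_both h3 (hs i).1.symm h1 (hs i).2.2
  rcases lt_or_gt_of_ne hij with h | h
  · exact main i j h he
  · exact main j i h he.symm

lemma xx_reach (h3 : 3 ≤ Fintype.card A) {D : Set (Pref A)} {f : Pref A → Pref A → A}
    (hf : Good D f) (hpc : (adjGraph D).Connected)
    (hall : ∀ a b, (adjGraph D).Adj a b → R1 D f a b) (a b : A) : R1 D f a b := by
  obtain ⟨w⟩ := hpc.preconnected a b
  induction w with
  | nil => intro P hP e Q hQ e'; rw [hf.un P hP Q hQ (by rw [e, e']), e]
  | cons hadj w ih => exact xx_trans h3 hf (xx_adj_HE hadj) (hall _ _ hadj) ih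

lemma xx_two (h3 : 3 ≤ Fintype.card A) {D : Set (Pref A)} {f : Pref A → Pref A → A}
    (hf : Good D f) (hpc : (adjGraph D).Connected) (hG : ∀ x, ∃ y, (adjGraph D).Adj x y)
    (hH : ∀ x a, ∃ y, y ≠ a ∧ HE D x y) :
    (∀ P ∈ D, ∀ Q ∈ D, f P Q = peak P) ∨ (∀ P ∈ D, ∀ Q ∈ D, f P Q = peak Q) := by
  have hsym : ∀ a b, HE D a b → R1 D f a b → R1 D f b a := by
    intro a b hab h
    rcases xx_dich h3 hf hab.symm with g | g
    · exact g
    · exact (xx_no_dom h3 hf hG hH ⟨hab, h, g⟩).elim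
  have hout : ∀ a b, (adjGraph D).Adj a b → R1 D f a b →
      ∀ x c, (adjGraph D).Adj x c → R1 D f x c := by
    intro a b hab h x
    obtain ⟨w⟩ := hpc.preconnected b x
    have hb : ∀ c, (adjGraph D).Adj b c → R1 D f b c := by
      intro c hc
      by_cases hca : c = a
      · subst hca; exact hsym _ _ (xx_adj_HE hab) h
      · exact xx_T h3 hf hab (xx_adj_HE hc) (Ne.symm hca) h
    clear hab h
    induction w with
    | nil => exact hb
    | cons hadj w ih =>
      apply ih
      intro c hc
      rename_i u v _
      have h := hb _ hadj
      by_cases hca : c = u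
      · subst hca; exact hsym _ _ (xx_adj_HE hadj) h
      · exact xx_T h3 hf hadj (xx_adj_HE hc) (Ne.symm hca) h
  by_cases hex : ∃ a b, (adjGraph D).Adj a b ∧ R1 D f a b
  · obtain ⟨a, b, hab, h⟩ := hex
    left
    intro P hP Q hQ
    exact xx_reach h3 hf hpc (hout a b hab h) _ _ P hP rfl Q hQ rfl
  · right
    intro P hP Q hQ
    refine xx_reach h3 hf.flip hpc ?_ (peak Q) (peak P) Q hQ rfl P hP rfl
    intro a b hab
    rw [xx_flip]
    rcases xx_dich h3 hf (xx_adj_HE hab.symm) with g | g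
    · exact (hex ⟨_, _, hab.symm, g⟩).elim
    · exact g

/-! ### From two voters to many -/

lemma xx_many (h3 : 3 ≤ Fintype.card A) {D : Set (Pref A)}
    (hrich : ∀ a : A, ∃ P ∈ D, peak P = a)
    (htwo : ∀ f : Pref A → Pref A → A, Good D f →
      (∀ P ∈ D, ∀ Q ∈ D, f P Q = peak P) ∨ (∀ P ∈ D, ∀ Q ∈ D, f P Q = peak Q)) (n : ℕ) :
    ∀ f : (Fin (n + 2) → Pref A) → A, IsRule D f → StrategyProof D f →
      ∃ i, ∀ P, InDom D P → f P = peak (P i) := by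
  have consDom : ∀ {m : ℕ} (p : Pref A) (P : Fin m → Pref A), p ∈ D → InDom D P →
      InDom D (Fin.cons p P : Fin (m + 1) → Pref A) := by
    intro m p P hp hP i
    refine Fin.cases ?_ ?_ i
    · simpa using hp
    · intro j; simpa using hP j
  induction n with
  | zero =>
    intro f hu hs
    have key : ∀ P : Fin 2 → Pref A, P = ![P 0, P 1] := by
      intro P; ext i : 1; fin_cases i <;> rfl
    have dom : ∀ P ∈ D, ∀ Q ∈ D, InDom D ![P, Q] := by
      intro P hP Q hQ i; fin_cases i <;> simpa
    have hg : Good D (fun P Q => f ![P, Q]) := by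
      refine ⟨?_, ?_, ?_⟩
      · intro P hP Q hQ e
        exact hu _ (dom P hP Q hQ) _ (by intro i; fin_cases i <;> simp [e])
      · intro P hP P' hP' Q hQ
        have := hs _ (dom P hP Q hQ) 0 P' hP'
        rw [show Function.update ![P, Q] 0 P' = ![P', Q] by
          ext i : 1; fin_cases i <;> simp] at this
        exact this
      · intro P hP P' hP' Q hQ
        have := hs _ (dom Q hQ P hP) 1 P' hP'
        rw [show Function.update ![Q, P] 1 P' = ![Q, P'] by
          ext i : 1; fin_cases i <;> simp] at this
        exact this
    rcases htwo _ hg with h | h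
    · refine ⟨0, fun P hP => ?_⟩
      have := h _ (hP 0) _ (hP 1)
      rw [key P]; simpa using this
    · refine ⟨1, fun P hP => ?_⟩
      have := h _ (hP 0) _ (hP 1)
      rw [key P]; simpa using this
  | succ n ih =>
    intro f hu hs
    -- curried form: the first two voters and the rest
    let F : Pref A → Pref A → (Fin (n + 1) → Pref A) → A :=
      fun p q R => f (Fin.cons p (Fin.cons q R : Fin (n + 2) → Pref A))
    have hF : ∀ P, f P = F (P 0) (P 1) (fun j => P j.succ.succ) := by
      intro P
      simp only [F]
      congr 1
      ext i : 1
      refine Fin.cases rfl (fun j => ?_) i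
      refine Fin.cases rfl (fun j => rfl) j
    have dom : ∀ p ∈ D, ∀ q ∈ D, ∀ R, InDom D R →
        InDom D (Fin.cons p (Fin.cons q R : Fin (n + 2) → Pref A) : Fin (n + 3) → Pref A) :=
      fun p hp q hq R hR => consDom _ _ hp (consDom _ _ hq hR)
    have F1 : ∀ p ∈ D, ∀ p' ∈ D, ∀ q ∈ D, ∀ R, InDom D R → wk p (F p q R) (F p' q R) := by
      intro p hp p' hp' q hq R hR
      have := hs _ (dom p hp q hq R hR) 0 p' hp'
      rw [Fin.update_cons_zero, Fin.cons_zero] at this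
      exact this
    have F2 : ∀ p ∈ D, ∀ p' ∈ D, ∀ q ∈ D, ∀ R, InDom D R → wk p (F q p R) (F q p' R) := by
      intro p hp p' hp' q hq R hR
      have := hs _ (dom q hq p hp R hR) (Fin.succ 0) p' hp'
      rw [← Fin.cons_update, Fin.update_cons_zero, Fin.cons_succ, Fin.cons_zero] at this
      exact this
    have F3 : ∀ p ∈ D, ∀ q ∈ D, ∀ R, InDom D R → ∀ i, ∀ r ∈ D,
        wk (R i) (F p q R) (F p q (Function.update R i r)) := by
      intro p hp q hq R hR i r hr
      have := hs _ (dom p hp q hq R hR) i.succ.succ r hr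
      rw [← Fin.cons_update, ← Fin.cons_update, Fin.cons_succ, Fin.cons_succ] at this
      exact this
    have updDom : ∀ {m : ℕ} (R : Fin m → Pref A), InDom D R → ∀ i, ∀ r ∈ D,
        InDom D (Function.update R i r) := by
      intro m R hR i r hr j
      by_cases h : j = i
      · subst h; simpa using hr
      · simpa [h] using hR j
    have wktrans : ∀ (p : Pref A) x y z, wk p x y → wk p y z → wk p x z := by
      intro p x y z h1 h2
      rcases h1 with h1 | h1
      · rw [h1]; exact h2
      · rcases h2 with h2 | h2
        · rw [← h2]; exact Or.inr h1
        · exact Or.inr (lt_trans h1 h2)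
    -- the cloned rule
    let g : (Fin (n + 2) → Pref A) → A := fun P => F (P 0) (P 0) (Fin.tail P)
    have tailDom : ∀ P : Fin (n + 2) → Pref A, InDom D P → InDom D (Fin.tail P) :=
      fun P hP i => hP i.succ
    have gu : IsRule D g := by
      intro P hP a ha
      refine hu _ (dom _ (hP 0) _ (hP 0) _ (tailDom P hP)) a ?_
      intro i
      refine Fin.cases (ha 0) (fun j => ?_) i
      refine Fin.cases (ha 0) (fun j => ?_) j
      exact ha j.succ
    have gs : StrategyProof D g := by
      intro P hP i Q hQ
      change wk (P i) (g P) (g (Function.update P i Q))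
      induction i using Fin.cases with
      | zero =>
        have e : g (Function.update P 0 Q) = F Q Q (Fin.tail P) := by
          simp [g]
        rw [e]
        exact wktrans _ _ _ _ (F1 _ (hP 0) Q hQ _ (hP 0) _ (tailDom P hP))
          (F2 _ (hP 0) Q hQ Q hQ _ (tailDom P hP))
      | succ i =>
        have e : g (Function.update P i.succ Q) =
            F (P 0) (P 0) (Function.update (Fin.tail P) i Q) := by
          simp only [g]
          rw [Fin.tail_update_succ, Function.update_of_ne (Fin.succ_ne_zero i).symm]
        rw [e]
        exact F3 _ (hP 0) _ (hP 0) _ (tailDom P hP) i Q hQ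
    obtain ⟨i, hi⟩ := ih g gu gs
    have hclone : ∀ p ∈ D, ∀ R, InDom D R →
        F p p R = peak ((Fin.cons p R : Fin (n + 2) → Pref A) i) := by
      intro p hp R hR
      have := hi _ (consDom p R hp hR)
      simpa [g] using this
    induction i using Fin.cases with
    | succ i =>
      refine ⟨i.succ.succ, fun P hP => ?_⟩
      rw [hF P]
      have hR : InDom D (fun j : Fin (n + 1) => P j.succ.succ) := fun j => hP _
      by_contra hne
      have c0 := hclone _ (hP 0) _ hR
      have c1 := hclone _ (hP 1) _ hR
      simp only [Fin.cons_succ] at c0 c1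
      have s1 := F1 _ (hP 1) _ (hP 0) _ (hP 1) _ hR
      have s2 := F2 _ (hP 1) _ (hP 0) _ (hP 0) _ hR
      rw [c1] at s1
      rw [c0] at s2
      rcases s2 with s2 | s2
      · exact hne s2
      · exact xx_asymm _ _ _ s2 s1
    | zero =>
      simp only [Fin.cons_zero] at hclone
      have hd : ∀ R, InDom D R →
          (∀ P ∈ D, ∀ Q ∈ D, F P Q R = peak P) ∨ (∀ P ∈ D, ∀ Q ∈ D, F P Q R = peak Q) := by
        intro R hR
        apply htwo (fun p q => F p q R)
        refine ⟨?_, fun P hP P' hP' Q hQ => F1 P hP P' hP' Q hQ R hR,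
          fun P hP P' hP' Q hQ => F2 P hP P' hP' Q hQ R hR⟩
        intro P hP Q hQ e
        have s1 := F1 P hP Q hQ Q hQ R hR
        rw [hclone Q hQ R hR, ← e] at s1
        exact xx_wk_peak h3 _ _ s1
      obtain ⟨x, y, hxy⟩ : ∃ x y : A, x ≠ y := by
        have : Nontrivial A := Fintype.one_lt_card_iff_nontrivial.1 (by omega)
        exact exists_pair_ne A
      obtain ⟨p, hp, px⟩ := hrich x
      obtain ⟨q, hq, qy⟩ := hrich y
      -- the dictator does not change
      have hstep : ∀ R, InDom D R → ∀ i, ∀ r ∈ D,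
          (∀ P ∈ D, ∀ Q ∈ D, F P Q R = peak P) →
          (∀ P ∈ D, ∀ Q ∈ D, F P Q (Function.update R i r) = peak P) := by
        intro R hR i r hr h
        rcases hd _ (updDom R hR i r hr) with h' | h'
        · exact h'
        · exfalso
          have a1 := F3 p hp q hq R hR i r hr
          have a2 := F3 q hq p hp R hR i r hr
          rw [h p hp q hq, h' p hp q hq, px, qy] at a1
          rw [h q hq p hp, h' q hq p hp, px, qy] at a2
          rcases a1 with a1 | a1
          · exact hxy a1
          · exact xx_asymm _ _ _ a1 a2
      have hall : ∀ R, InDom D R → ∀ R', InDom D R' →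
          (∀ P ∈ D, ∀ Q ∈ D, F P Q R = peak P) → (∀ P ∈ D, ∀ Q ∈ D, F P Q R' = peak P) := by
        intro R hR R' hR' h
        have : ∀ s : Finset (Fin (n + 1)), ∀ P ∈ D, ∀ Q ∈ D,
            F P Q (fun j => if j ∈ s then R' j else R j) = peak P := by
          intro s
          induction s using Finset.induction_on with
          | empty => simpa using h
          | insert a s ha ihs =>
            have := hstep (fun j => if j ∈ s then R' j else R j)
              (by intro j; dsimp only; split_ifs; exacts [hR' j, hR j]) a (R' a) (hR' a) ihs
            have e : Function.update (fun j => if j ∈ s then R' j else R j) a (R' a) =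
                (fun j => if j ∈ insert a s then R' j else R j) := by
              ext j : 1
              by_cases hj : j = a
              · subst hj; simp
              · simp [hj]
            rw [← e]
            exact this
        simpa using this Finset.univ
      by_cases hex : ∃ R, InDom D R ∧ ∀ P ∈ D, ∀ Q ∈ D, F P Q R = peak P
      · obtain ⟨R, hR, h⟩ := hex
        refine ⟨0, fun P hP => ?_⟩
        rw [hF P]
        exact hall R hR _ (fun j => hP _) h _ (hP 0) _ (hP 1)
      · refine ⟨1, fun P hP => ?_⟩
        rw [hF P]
        have hR : InDom D (fun j : Fin (n + 1) => P j.succ.succ) := fun j => hP _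
        rcases hd _ hR with h | h
        · exact (hex ⟨_, hR, h⟩).elim
        · exact h _ (hP 0) _ (hP 1)

/-- Auxiliary Proposition: a domain satisfying path-connectedness
and leaf symmetry is a non-dictatorial domain iff it satisfies the unique
seconds property. -/
theorem stmt0_auxiliary_proposition (D : Set (Pref A)) (hD : D.Nonempty)
    (hcard : 3 ≤ Fintype.card A)
    (hpc : PathConnectedDom D) (hls : LeafSymmetry D) :
    ¬ DictatorialDomain D ↔ UniqueSeconds D := by
  have hpc' : (adjGraph D).Connected := hpc
  have hnt : Nontrivial A := Fintype.one_lt_card_iff_nontrivial.1 (by omega)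
  have hG : ∀ x, ∃ y, (adjGraph D).Adj x y := by
    intro x
    obtain ⟨y, hy⟩ := hpc'.preconnected.exists_adj_of_nontrivial x
    exact ⟨y, hy⟩
  have hrich : ∀ a : A, ∃ P ∈ D, peak P = a := by
    intro a
    obtain ⟨y, hy⟩ := hG a
    obtain ⟨P, hP, _, _, h, _⟩ := xx_adj hy
    exact ⟨P, hP, h⟩
  constructor
  · intro hnd
    by_contra hus
    apply hnd
    have hH : ∀ x a, ∃ y, y ≠ a ∧ HE D x y := by
      intro x a
      obtain ⟨y, hy⟩ := hG x
      by_cases hu : ∃! y, (adjGraph D).Adj x y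
      · have hy1 := xx_adj_HE hy
        have : ∃ u ∈ secondsSet D x, ∃ v ∈ secondsSet D x, u ≠ v := by
          by_contra hcon
          push Not at hcon
          refine hus ⟨x, y, ?_⟩
          ext z
          exact ⟨fun hz => hcon z hz y hy1.1, fun hz => by rw [Set.mem_singleton_iff.1 hz]; exact hy1.1⟩
        obtain ⟨z, hz1, hz2, hz3⟩ := hls x hu this
        by_cases hya : y = a
        · refine ⟨z, ?_, hz1, hz3⟩
          rintro rfl
          subst hya
          exact hz2 hy
        · exact ⟨y, hya, hy1⟩
      · by_cases hya : y = a
        · subst hya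
          by_contra hcon
          push Not at hcon
          apply hu
          refine ⟨y, hy, fun z hz => ?_⟩
          by_contra hzy
          exact hcon z hzy (xx_adj_HE hz)
        · exact ⟨y, hya, xx_adj_HE hy⟩
    intro n hn f hu hs
    obtain ⟨m, rfl⟩ : ∃ m, n = m + 2 := ⟨n - 2, by omega⟩
    obtain ⟨i, hi⟩ := xx_many hcard hrich
      (fun f hf => xx_two hcard hf hpc' hG hH) m f hu hs
    exact ⟨i, fun P hP _ => hi P hP⟩
  · rintro ⟨x, b, hxb⟩ hdict
    have hsec : ∀ P ∈ D, peak P = x → second P = b := by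
      intro P hP e
      have : second P ∈ secondsSet D x := ⟨P, hP, e, rfl⟩
      rw [hxb] at this
      exact this
    have hbx : b ≠ x := by
      obtain ⟨P, hP, e⟩ := hrich x
      rw [← hsec P hP e, ← e]
      exact (xx_peak_ne_second hcard P).symm
    let f : (Fin 2 → Pref A) → A := fun P =>
      if peak (P 0) = x then (if prefers (P 1) x b then x else b) else peak (P 0)
    have hu : IsRule D f := by
      intro P hP a ha
      simp only [f]
      split_ifs with h1 h2
      · rw [← h1, ha 0]
      · exfalso
        apply h2
        have e : peak (P 1) = x := by rw [ha 1, ← ha 0, h1]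
        rw [← e]
        exact xx_peak_pref hcard _ _ (by rw [e]; exact hbx)
      · exact ha 0
    have hs : StrategyProof D f := by
      intro P hP i Q hQ
      have best : ∀ y, f P = peak (P 0) → f P = y ∨ prefers (P 0) (f P) y := by
        intro y h
        by_cases hy : y = peak (P 0)
        · left; rw [h, hy]
        · right; rw [h]; exact xx_peak_pref hcard _ _ hy
      fin_cases i
      · change f P = f (Function.update P 0 Q) ∨ prefers (P 0) (f P) (f (Function.update P 0 Q))
        by_cases h1 : peak (P 0) = x
        · by_cases h2 : prefers (P 1) x b
          · exact best _ (by simp [f, h1, h2])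
          · have e : f P = b := by simp [f, h1, h2]
            have hne : f (Function.update P 0 Q) ≠ x := by
              simp only [f, Function.update_self]
              rw [Function.update_of_ne (by decide : (1 : Fin 2) ≠ 0), if_neg h2]
              split_ifs with h
              · exact hbx
              · exact h
            by_cases hy : f (Function.update P 0 Q) = b
            · left; rw [e, hy]
            · right
              rcases xx_total (P 0) (f P) (f (Function.update P 0 Q)) (by rw [e]; exact Ne.symm hy)
                with h | h
              · exact h
              · exfalso
                have h' : wk (P 0) (f (Function.update P 0 Q)) (second (P 0)) := by
                  rw [hsec _ (hP 0) h1, ← e]; exact Or.inr h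
                rcases xx_wk_second hcard _ _ h' with g | g
                · exact hne (g.trans h1)
                · exact hy (g.trans (hsec _ (hP 0) h1))
        · exact best _ (by simp [f, h1])
      · change f P = f (Function.update P 1 Q) ∨ prefers (P 1) (f P) (f (Function.update P 1 Q))
        simp only [f, Function.update_self]
        rw [Function.update_of_ne (by decide : (0 : Fin 2) ≠ 1)]
        by_cases h1 : peak (P 0) = x
        · simp only [h1, if_true]
          by_cases h2 : prefers (P 1) x b
          · rw [if_pos h2]
            split_ifs
            · exact Or.inl rfl
            · exact Or.inr h2
          · rw [if_neg h2]
            split_ifs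
            · exact Or.inr ((xx_total (P 1) x b hbx.symm).resolve_left h2)
            · exact Or.inl rfl
        · simp [h1]
    obtain ⟨i, hi⟩ := hdict 2 le_rfl f hu hs
    obtain ⟨Px, hPx, ex⟩ := hrich x
    obtain ⟨Pb, hPb, eb⟩ := hrich b
    have dom : ∀ P ∈ D, ∀ Q ∈ D, InDom D ![P, Q] := by
      intro P hP Q hQ i; fin_cases i <;> simpa
    have nb : ¬ prefers Pb x b := by
      intro h
      rw [← eb] at h
      exact xx_asymm _ _ _ h (Or.inr (xx_peak_pref hcard Pb x (by rw [eb]; exact hbx.symm)))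
    fin_cases i
    · have := hi _ (dom Px hPx Pb hPb) (fun _ => Set.mem_univ _)
      simp [f, ex, nb] at this
      exact hbx this
    · have := hi _ (dom Pb hPb Px hPx) (fun _ => Set.mem_univ _)
      simp [f, ex, eb, hbx] at this
end

section
/- Let D be a non-dictatorial, unidimensional domain. The following are equivalent: (1) there exists a two-voter rule f : D^2 → A that is invariant, tops-only and strategy-proof; (2) D is a semi-single-peaked domain; (3) there exist a tree T on A and x̄ ∈ A such that the two-voter projection rule f : D^2 → A on T w.r.t. x̄ is strategy-proof. -/
open Classical

set_option linter.unusedSectionVars false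
set_option linter.unusedVariables false

variable {A : Type*} [Fintype A] [DecidableEq A] [Nonempty A]

/-! ### Preferences -/

theorem ssc_rk_eq (P : Pref A) (k : ℕ) (h : k < Fintype.card A) : rk P k = P ⟨k, h⟩ := by
  simp [rk, h]

theorem ssc_rk_symm (P : Pref A) (u : A) : rk P (P.symm u).val = u := by
  rw [ssc_rk_eq P _ (P.symm u).isLt]; simp

theorem ssc_symm_eq (P : Pref A) (k : ℕ) (h : k < Fintype.card A) (u : A) (hu : rk P k = u) :
    (P.symm u).val = k := by
  rw [ssc_rk_eq P _ h] at hu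
  rw [← hu]; simp

theorem ssc_card_pos : 0 < Fintype.card A := Fintype.card_pos

theorem ssc_swap (P P' : Pref A) (h1 : second P = peak P') (h2 : second P' = peak P)
    (h3 : ∀ k : ℕ, 2 ≤ k → rk P k = rk P' k) (u v : A)
    (hu : prefers P u v) (hv : prefers P' v u) : u = peak P ∧ v = peak P' := by
  unfold prefers at hu hv
  rw [Fin.lt_def] at hu hv
  have e1 := ssc_rk_symm P u
  have e2 := ssc_rk_symm P' v
  have e3 := ssc_rk_symm P v
  have e4 := ssc_rk_symm P' u
  have key1 : (P.symm u).val < 2 := by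
    by_contra hc
    push Not at hc
    have := ssc_symm_eq P' _ (P.symm u).isLt u (by rw [← h3 _ hc]; exact e1)
    have := ssc_symm_eq P' _ (P.symm v).isLt v (by rw [← h3 _ (by omega)]; exact e3)
    omega
  have key2 : (P'.symm v).val < 2 := by
    by_contra hc
    push Not at hc
    have := ssc_symm_eq P _ (P'.symm v).isLt v (by rw [h3 _ hc]; exact e2)
    have := ssc_symm_eq P _ (P'.symm u).isLt u (by rw [h3 _ (by omega)]; exact e4)
    omega
  have hu0 : (P.symm u).val = 0 := by
    by_contra hc
    have h : (P.symm u).val = 1 := by omega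
    rw [h] at e1
    have := ssc_symm_eq P' 0 ssc_card_pos u (by rw [← e1]; exact h1.symm)
    omega
  have hv0 : (P'.symm v).val = 0 := by
    by_contra hc
    have h : (P'.symm v).val = 1 := by omega
    rw [h] at e2
    have := ssc_symm_eq P 0 ssc_card_pos v (by rw [← e2]; exact h2.symm)
    omega
  rw [hu0] at e1
  rw [hv0] at e2
  exact ⟨e1.symm, e2.symm⟩

/-! ### Projection-like maps on graphs -/

/-- Along every edge the value is constant, or both ends are fixed. -/
def SscPP (G : SimpleGraph A) (g : A → A) : Prop :=
  ∀ x y, G.Adj x y → g x = g y ∨ (g x = x ∧ g y = y)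

theorem ssc_const {G : SimpleGraph A} {g : A → A} (hg : SscPP G g) {x y : A} (p : G.Walk x y)
    (h : g x ∉ p.support) : ∀ z ∈ p.support, g z = g x := by
  induction p with
  | nil => intro z hz; simp at hz; rw [hz]
  | cons hadj p ih =>
    rename_i u v w
    simp only [SimpleGraph.Walk.support_cons, List.mem_cons, not_or] at h ⊢
    have e : g u = g v := by
      rcases hg _ _ hadj with e | ⟨e, _⟩
      · exact e
      · exact absurd e h.1
    rintro z (rfl | hz)
    · rfl
    · rw [e]; exact ih (by rw [← e]; exact h.2) z hz

theorem ssc_fixed_path {G : SimpleGraph A} {g : A → A} (hg : SscPP G g) {x y : A} (p : G.Walk x y)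
    (hp : p.IsPath) (hx : g x = x) (hy : g y = y) : ∀ z ∈ p.support, g z = z := by
  induction p with
  | nil => intro z hz; simp at hz; rw [hz]; exact hx
  | cons hadj p ih =>
    rename_i u v w
    rw [SimpleGraph.Walk.cons_isPath_iff] at hp
    simp only [SimpleGraph.Walk.support_cons, List.mem_cons]
    rintro z (rfl | hz)
    · exact hx
    · rcases hg _ _ hadj with e | ⟨_, e⟩
      · exfalso
        have := ssc_const hg p (by rw [← e, hx]; exact hp.2) w p.end_mem_support
        rw [hy, ← e, hx] at this
        apply hp.2
        rw [← this]
        exact p.end_mem_support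
      · exact ih hp.1 e hy z hz

theorem ssc_const_path {G : SimpleGraph A} {g : A → A} (hg : SscPP G g) {x y : A} (p : G.Walk x y)
    (hp : p.IsPath) (hxy : g x = g y) : ∀ z ∈ p.support, g z = g x := by
  induction p with
  | nil => intro z hz; simp at hz; rw [hz]
  | cons hadj p ih =>
    rename_i u v w
    rw [SimpleGraph.Walk.cons_isPath_iff] at hp
    simp only [SimpleGraph.Walk.support_cons, List.mem_cons]
    rintro z (rfl | hz)
    · rfl
    · rcases hg _ _ hadj with e | ⟨e1, e2⟩
      · rw [e]; exact ih hp.1 (by rw [← e]; exact hxy) z hz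
      · exfalso
        have := ssc_const hg p.reverse (by rw [← hxy, e1]; simpa using hp.2) v
          (by simp)
        rw [← hxy, e1, e2] at this
        exact hp.2 (this ▸ p.start_mem_support)

theorem ssc_dichotomy {G : SimpleGraph A} {g : A → A} (hg : SscPP G g) {x y : A} (p : G.Walk x y)
    (hp : p.IsPath) (hadj : G.Adj x y) :
    (∀ z ∈ p.support, g z = z) ∨ (∀ z ∈ p.support, ∀ z' ∈ p.support, g z = g z') := by
  rcases hg _ _ hadj with e | ⟨e1, e2⟩
  · right
    intro z hz z' hz'
    rw [ssc_const_path hg p hp e z hz, ssc_const_path hg p hp e z' hz']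
  · left
    exact ssc_fixed_path hg p hp e1 e2

theorem ssc_first_hit {G : SimpleGraph A} (C : Set A) {u w : A} (p : G.Walk u w) (hw : w ∈ C) :
    ∃ c ∈ C, ∃ q : G.Walk u c, ∀ z ∈ q.support, z ∈ C → z = c := by
  induction p with
  | nil => exact ⟨_, hw, SimpleGraph.Walk.nil, by simp⟩
  | cons hadj p ih =>
    rename_i a b d
    by_cases ha : a ∈ C
    · exact ⟨a, ha, SimpleGraph.Walk.nil, by simp⟩
    · obtain ⟨c, hc, q, hq⟩ := ih hw
      refine ⟨c, hc, SimpleGraph.Walk.cons hadj q, ?_⟩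
      simp only [SimpleGraph.Walk.support_cons, List.mem_cons]
      rintro z (rfl | hz) hzC
      · exact absurd hzC ha
      · exact hq z hz hzC

/-- A two-variable function dictated by the first coordinate on a set `C` with three elements
cannot be constantly absorbed at a point. -/
theorem ssc_no_dict {G : SimpleGraph A} (hG : G.Connected) (F : A → A → A)
    (hF : ∀ x, SscPP G (F x)) (xb : A) (hxb : ∀ x, F x xb = xb) (C : Set A)
    (h3 : ∀ u v : A, ∃ w ∈ C, w ≠ u ∧ w ≠ v)
    (hd : ∀ x ∈ C, ∀ y ∈ C, F x y = x) : False := by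
  obtain ⟨w, hw, -⟩ := h3 xb xb
  obtain ⟨p⟩ := hG.preconnected xb w
  obtain ⟨c, hc, q, hq⟩ := ssc_first_hit C p hw
  obtain ⟨x, hx, hxc, hxx⟩ := h3 c xb
  have := ssc_const (hF x) q.reverse
    (by
      rw [hd x hx c hc]
      intro hm
      exact hxc (hq x (by simpa using hm) hx)) xb (by simp)
  rw [hxb, hd x hx c hc] at this
  exact hxx this.symm

theorem ssc_acyclic {G : SimpleGraph A} (hG : G.Connected) (F : A → A → A)
    (hu : ∀ x, F x x = x)
    (hF : ∀ x, SscPP G (F x)) (hF' : ∀ y, SscPP G (fun x => F x y))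
    (xb : A) (hxb : ∀ x, F x xb = xb) (hxb' : ∀ y, F xb y = xb) : G.IsAcyclic := by
  rw [SimpleGraph.isAcyclic_iff_forall_adj_isBridge]
  intro x y hadj
  rw [SimpleGraph.isBridge_iff]
  intro hreach
  obtain ⟨p0, hp0⟩ := hreach.exists_isPath
  have hle : G.deleteEdges {s(x, y)} ≤ G := SimpleGraph.deleteEdges_le _
  have hp : (p0.mapLe hle).IsPath := (SimpleGraph.Walk.isPath_mapLe hle).2 hp0
  set C : Set A := {z | z ∈ p0.support} with hC
  have hsup : ∀ z, z ∈ (p0.mapLe hle).support ↔ z ∈ C := by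
    intro z; rw [SimpleGraph.Walk.support_mapLe_eq_support]; rfl
  have dich : ∀ g, SscPP G g → (∀ z ∈ C, g z = z) ∨ (∀ z ∈ C, ∀ z' ∈ C, g z = g z') := by
    intro g hg
    have := ssc_dichotomy hg _ hp hadj
    simpa only [hsup] using this
  -- three elements
  have hxC : x ∈ C := p0.start_mem_support
  have hyC : y ∈ C := p0.end_mem_support
  obtain ⟨w, hwC, hwx, hwy⟩ : ∃ w ∈ C, w ≠ x ∧ w ≠ y := by
    cases p0 with
    | nil => exact absurd rfl hadj.ne
    | cons h q =>
      rename_i v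
      refine ⟨v, by simp [hC], ?_, ?_⟩
      · exact fun e => by rw [e] at h; exact h.ne rfl
      · rintro rfl
        simp at h
  have h3 : ∀ u v : A, ∃ w ∈ C, w ≠ u ∧ w ≠ v := by
    intro u v
    have := hadj.ne
    by_contra hc
    push Not at hc
    have a1 := hc x hxC
    have a2 := hc y hyC
    have a3 := hc w hwC
    by_cases b1 : x = u <;> by_cases b2 : y = u <;> by_cases b3 : w = u <;>
      simp_all
  by_cases hrow : ∃ x ∈ C, ∃ z ∈ C, F x z = x ∧ z ≠ x
  · obtain ⟨a, ha, z, hz, hfz, hza⟩ := hrow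
    have r1 : ∀ z' ∈ C, F a z' = a := by
      rcases dich _ (hF a) with h | h
      · exact absurd ((h z hz).symm.trans hfz) hza
      · intro z' hz'; rw [h z' hz' a ha, hu]
    have c1 : ∀ b ∈ C, b ≠ a → ∀ u ∈ C, F u b = u := by
      intro b hb hba
      rcases dich _ (hF' b) with h | h
      · exact h
      · exfalso
        have := h a ha b hb
        simp only [hu, r1 b hb] at this
        exact hba this.symm
    refine ssc_no_dict hG F hF xb hxb C h3 ?_
    intro u hu' b hb
    by_cases hba : b = a
    · subst hba
      by_cases hub : u = b
      · rw [hub, hu]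
      obtain ⟨t, ht, htb, htu⟩ := h3 b u
      rcases dich _ (hF u) with h | h
      · exact absurd ((h t ht).symm.trans (c1 t ht htb u hu')) htu
      · rw [h b hb u hu', hu]
    · exact c1 b hb hba u hu'
  · push Not at hrow
    refine ssc_no_dict hG (fun a b => F b a) hF' xb hxb' C h3 ?_
    intro u hu' b hb
    rcases dich _ (hF b) with h | h
    · exact h u hu'
    · have := h u hu' b hb
      rw [hu] at this
      have h2 := hrow b hb u hu' this
      rw [h2, hu]

/-! ### Intervals -/

theorem ssc_intv_comm (T : SimpleGraph A) (x y : A) : intv T x y = intv T y x := by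
  ext z
  simp only [intv, Set.mem_ofPred_eq]
  rw [T.dist_comm (u := x) (v := z), T.dist_comm (u := z) (v := y), T.dist_comm (u := x) (v := y)]
  omega

theorem ssc_left_mem (T : SimpleGraph A) (x y : A) : x ∈ intv T x y := by simp [intv]

theorem ssc_right_mem (T : SimpleGraph A) (x y : A) : y ∈ intv T x y := by simp [intv]

/-- Shortest path through a point of the interval. -/
theorem ssc_through {G : SimpleGraph A} (hG : G.Connected) {x y z : A} (hz : z ∈ intv G x y) :
    ∃ p : G.Walk x y, p.IsPath ∧ z ∈ p.support ∧ p.length = G.dist x y := by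
  obtain ⟨p, hp⟩ := hG.exists_walk_length_eq_dist x z
  obtain ⟨q, hq⟩ := hG.exists_walk_length_eq_dist z y
  have hl : (p.append q).length = G.dist x y := by
    rw [SimpleGraph.Walk.length_append, hp, hq]; exact hz
  exact ⟨p.append q, SimpleGraph.Walk.isPath_of_length_eq_dist _ hl, by simp, hl⟩

theorem ssc_mem_of_support {G : SimpleGraph A} (hG : G.Connected) {x y z : A} (p : G.Walk x y)
    (hp : p.length = G.dist x y) (hz : z ∈ p.support) : z ∈ intv G x y := by
  have h1 : (p.takeUntil z hz).length + (p.dropUntil z hz).length = p.length := by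
    rw [← SimpleGraph.Walk.length_append, SimpleGraph.Walk.take_spec]
  have h2 := SimpleGraph.dist_le (p.takeUntil z hz)
  have h3 := SimpleGraph.dist_le (p.dropUntil z hz)
  have h4 := hG.dist_triangle (u := x) (v := z) (w := y)
  simp only [intv, Set.mem_ofPred_eq]
  omega

theorem ssc_fixed_intv {G : SimpleGraph A} (hG : G.Connected) {g : A → A} (hg : SscPP G g)
    {x y z : A} (hx : g x = x) (hy : g y = y) (hz : z ∈ intv G x y) : g z = z := by
  obtain ⟨p, hp, hzp, -⟩ := ssc_through hG hz
  exact ssc_fixed_path hg p hp hx hy z hzp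

theorem ssc_value_intv {G : SimpleGraph A} (hG : G.Connected) {g : A → A} (hg : SscPP G g)
    {x y : A} (hy : g y = y) : g x ∈ intv G x y := by
  obtain ⟨p, hp⟩ := hG.exists_walk_length_eq_dist x y
  refine ssc_mem_of_support hG p hp ?_
  by_contra hc
  have := ssc_const hg p hc y p.end_mem_support
  rw [hy] at this
  rw [← this] at hc
  exact hc p.end_mem_support

theorem ssc_path_dist {T : SimpleGraph A} (hT : T.IsTree) {x y : A} (p : T.Walk x y)
    (hp : p.IsPath) : p.length = T.dist x y := by
  obtain ⟨q, hq⟩ := hT.connected.exists_walk_length_eq_dist x y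
  have hq' := SimpleGraph.Walk.isPath_of_length_eq_dist _ hq
  have := hT.isAcyclic.path_unique ⟨p, hp⟩ ⟨q, hq'⟩
  have e : p = q := congrArg Subtype.val this
  rw [e, hq]

theorem ssc_mem_support {T : SimpleGraph A} (hT : T.IsTree) {x y z : A} (p : T.Walk x y)
    (hp : p.IsPath) : z ∈ p.support ↔ z ∈ intv T x y := by
  constructor
  · exact ssc_mem_of_support hT.connected p (ssc_path_dist hT p hp)
  · intro hz
    obtain ⟨q, hq, hzq, -⟩ := ssc_through hT.connected hz
    have := hT.isAcyclic.path_unique ⟨p, hp⟩ ⟨q, hq⟩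
    have e : p = q := congrArg Subtype.val this
    rw [e]; exact hzq

/-- Two points of an interval in a tree. -/
theorem ssc_split {T : SimpleGraph A} (hT : T.IsTree) {x y u v : A} (hu : u ∈ intv T x y)
    (hv : v ∈ intv T x y) : v ∈ intv T x u ∨ v ∈ intv T u y := by
  obtain ⟨p, hp, hup, -⟩ := ssc_through hT.connected hu
  have hvp := (ssc_mem_support hT p hp).2 hv
  rw [← SimpleGraph.Walk.take_spec p hup, SimpleGraph.Walk.mem_support_append_iff] at hvp
  rcases hvp with h | h
  · exact Or.inl ((ssc_mem_support hT _ (hp.takeUntil hup)).1 h)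
  · exact Or.inr ((ssc_mem_support hT _ (hp.dropUntil hup)).1 h)

theorem ssc_convex {T : SimpleGraph A} (hT : T.IsTree) {x y u v w : A} (hu : u ∈ intv T x y)
    (hv : v ∈ intv T x y) (hw : w ∈ intv T u v) : w ∈ intv T x y := by
  have tri := fun a b c => hT.connected.dist_triangle (u := a) (v := b) (w := c)
  have hc := fun a b => T.dist_comm (u := a) (v := b)
  have h := ssc_split hT hu hv
  have t1 := tri x w y
  have t2 := tri x u w
  have t3 := tri w v y
  have t4 := tri x v w
  have t5 := tri w u y
  have := hc u v
  have := hc u w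
  have := hc v w
  simp only [intv, Set.mem_ofPred_eq] at *
  rcases h with h | h <;> omega

theorem ssc_proj_exists {T : SimpleGraph A} (hT : T.IsTree) (x y c : A) :
    ∃ c', IsProjPt T (intv T x y) c c' := by
  have hne : (intv T x y).Nonempty := ⟨x, ssc_left_mem T x y⟩
  obtain ⟨c', hc', hmin⟩ := (Set.toFinite (intv T x y)).exists_minimalFor
    (fun z => T.dist c z) _ hne
  refine ⟨c', hc', ?_⟩
  intro b hb
  obtain ⟨p, hp⟩ := hT.connected.exists_walk_length_eq_dist c c'
  obtain ⟨q, hq⟩ := hT.connected.exists_walk_length_eq_dist c' b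
  have hpp := SimpleGraph.Walk.isPath_of_length_eq_dist _ hp
  have hqp := SimpleGraph.Walk.isPath_of_length_eq_dist _ hq
  have hpath : (p.append q).IsPath := by
    rw [SimpleGraph.Walk.isPath_def, SimpleGraph.Walk.support_append]
    rw [List.nodup_append]
    refine ⟨hpp.support_nodup, hqp.support_nodup.sublist (List.tail_sublist _), ?_⟩
    rintro a ha a' ha' rfl
    have hane : a ≠ c' := by
      rintro rfl
      have := hqp.support_nodup
      rw [SimpleGraph.Walk.support_eq_cons] at this
      exact (List.nodup_cons.1 this).1 ha'
    have haq : a ∈ q.support := List.mem_of_mem_tail ha'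
    have hap := ssc_mem_of_support hT.connected p hp ha
    have hain := ssc_convex hT hc' hb (ssc_mem_of_support hT.connected q hq haq)
    have hpos := hT.connected.pos_dist_of_ne hane
    have hle : T.dist c a ≤ T.dist c c' := by
      simp only [intv, Set.mem_ofPred_eq] at hap; omega
    have : T.dist c c' ≤ T.dist c a := hmin hain hle
    simp only [intv, Set.mem_ofPred_eq] at hap
    omega
  exact (ssc_mem_support hT _ hpath).1 (by simp)

theorem ssc_projOn_spec {T : SimpleGraph A} (hT : T.IsTree) (x y c : A) :
    IsProjPt T (intv T x y) c (projOn T (intv T x y) c) := by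
  have h := ssc_proj_exists hT x y c
  unfold projOn
  rw [dif_pos h]
  exact h.choose_spec

/-! ### Hard direction: rule to semi-single-peakedness -/

theorem ssc_peak_best (P : Pref A) (a : A) : ¬ prefers P a (peak P) := by
  intro h
  have := ssc_symm_eq P 0 ssc_card_pos (peak P) rfl
  unfold prefers at h
  rw [Fin.lt_def] at h
  omega

theorem ssc_rule_to_ssp (D : Set (Pref A)) (hcard : 3 ≤ Fintype.card A)
    (hG : (adjGraph D).Connected)
    (Pl Pu : Pref A) (hPl : Pl ∈ D) (hPu : Pu ∈ D) (hrev : Reversed Pl Pu)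
    (f : (Fin 2 → Pref A) → A) (hr : IsRule D f) (ht : TopsOnly D f) (hs : StrategyProof D f)
    (hinv : f ![Pl, Pu] = f ![Pu, Pl]) : SemiSPDomain D := by
  have hadj : ∀ x y, (adjGraph D).Adj x y → DomAdjacent D x y := by
    intro x y h
    rw [adjGraph, SimpleGraph.fromRel_adj] at h
    rcases h.2 with h | ⟨P, hP, P', hP', h1, h2, h3, h4, h5⟩
    · exact h
    · exact ⟨P', hP', P, hP, h3, h4, h1, h2, fun k hk => (h5 k hk).symm⟩
  have hrich : ∀ a : A, ∃ P ∈ D, peak P = a := by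
    intro a
    have : Nontrivial A := Fintype.one_lt_card_iff_nontrivial.1 (by omega)
    obtain ⟨b, hb⟩ := hG.preconnected.exists_adj_of_nontrivial a
    obtain ⟨P, hP, P', hP', h1, -⟩ := hadj _ _ hb
    exact ⟨P, hP, h1⟩
  choose R hRD hRp using hrich
  set F : A → A → A := fun x y => f ![R x, R y] with hFdef
  have indom : ∀ P ∈ D, ∀ Q ∈ D, InDom D ![P, Q] := by
    intro P hP Q hQ i
    fin_cases i <;> simpa
  have hF : ∀ P ∈ D, ∀ Q ∈ D, f ![P, Q] = F (peak P) (peak Q) := by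
    intro P hP Q hQ
    apply ht _ _ (indom _ hP _ hQ) (indom _ (hRD _) _ (hRD _))
    intro i
    fin_cases i <;> simp [hRp]
  have hu : ∀ x, F x x = x := by
    intro x
    apply hr _ (indom _ (hRD _) _ (hRD _))
    intro i
    fin_cases i <;> simp [hRp]
  have sp1 : ∀ P ∈ D, ∀ x y, F (peak P) y = F x y ∨ prefers P (F (peak P) y) (F x y) := by
    intro P hP x y
    have := hs ![P, R y] (indom _ hP _ (hRD _)) 0 (R x) (hRD x)
    have e : Function.update ![P, R y] 0 (R x) = ![R x, R y] := by
      ext i; fin_cases i <;> simp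
    rw [e, hF _ hP _ (hRD _), hF _ (hRD _) _ (hRD _), hRp, hRp] at this
    simpa using this
  have sp2 : ∀ P ∈ D, ∀ x y, F x (peak P) = F x y ∨ prefers P (F x (peak P)) (F x y) := by
    intro P hP x y
    have := hs ![R x, P] (indom _ (hRD _) _ hP) 1 (R y) (hRD y)
    have e : Function.update ![R x, P] 1 (R y) = ![R x, R y] := by
      ext i; fin_cases i <;> simp
    rw [e, hF _ (hRD _) _ hP, hF _ (hRD _) _ (hRD _), hRp, hRp] at this
    simpa using this
  have pp2 : ∀ x, SscPP (adjGraph D) (F x) := by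
    intro z x y hxy
    obtain ⟨P, hP, P', hP', h1, h2, h3, h4, h5⟩ := hadj _ _ hxy
    have a1 := sp2 P hP z y
    have a2 := sp2 P' hP' z x
    rw [h1] at a1
    rw [h3] at a2
    by_cases e : F z x = F z y
    · exact Or.inl e
    · right
      have := ssc_swap P P' (h2.trans h3.symm) (h4.trans h1.symm) h5 _ _
        (a1.resolve_left e) (a2.resolve_left (Ne.symm e))
      rwa [h1, h3] at this
  have pp1 : ∀ y, SscPP (adjGraph D) (fun x => F x y) := by
    intro z x y hxy
    obtain ⟨P, hP, P', hP', h1, h2, h3, h4, h5⟩ := hadj _ _ hxy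
    have a1 := sp1 P hP y z
    have a2 := sp1 P' hP' x z
    rw [h1] at a1
    rw [h3] at a2
    by_cases e : F x z = F y z
    · exact Or.inl e
    · right
      have := ssc_swap P P' (h2.trans h3.symm) (h4.trans h1.symm) h5 _ _
        (a1.resolve_left e) (a2.resolve_left (Ne.symm e))
      rwa [h1, h3] at this
  -- values are fixed
  have idem : ∀ g : A → A, SscPP (adjGraph D) g → (∃ y, g y = y) → ∀ x, g (g x) = g x := by
    intro g hg ⟨y, hy⟩ x
    obtain ⟨p, hp⟩ := hG.exists_walk_length_eq_dist x y
    have hm : g x ∈ p.support := by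
      by_contra hc
      have := ssc_const hg p hc y p.end_mem_support
      rw [hy] at this
      rw [← this] at hc
      exact hc p.end_mem_support
    clear hp hy
    induction p with
    | nil => simp at hm; rw [hm, hm]
    | cons h q ih =>
      rename_i u v w
      rcases hg _ _ h with e | ⟨e, _⟩
      · by_cases hgu : g u = u
        · rw [hgu, hgu]
        · rw [e]
          apply ih
          rw [← e]
          simpa [hgu] using hm
      · rw [e, e]
  rw [hF _ hPl _ hPu, hF _ hPu _ hPl] at hinv
  set a := peak Pl with ha
  set b := peak Pu with hb
  set xb := F a b with hxbdef
  have k1 : F a xb = xb := idem _ (pp2 a) ⟨a, hu a⟩ b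
  have k2 : F xb b = xb := idem _ (pp1 b) ⟨b, hu b⟩ a
  have k3 : F b xb = xb := by rw [hinv]; exact idem _ (pp2 b) ⟨b, hu b⟩ a
  have k4 : F xb a = xb := by
    have : F (F b a) a = F b a := idem _ (pp1 a) ⟨a, hu a⟩ b
    rw [← hinv] at this; exact this
  have hasym : ∀ P : Pref A, ∀ u v, prefers P u v → prefers P v u → False := by
    intro P u v h1 h2
    exact lt_asymm h1 h2
  have hxb2 : ∀ y, F xb y = xb := by
    intro y
    by_contra hc
    have a1 := sp2 Pl hPl xb y
    have a2 := sp2 Pu hPu xb y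
    rw [← ha, k4] at a1
    rw [← hb, k2] at a2
    exact hasym _ _ _ ((hrev _ _).1 (a1.resolve_left (Ne.symm hc))) (a2.resolve_left (Ne.symm hc))
  have hxb1 : ∀ x, F x xb = xb := by
    intro y
    by_contra hc
    have a1 := sp1 Pl hPl y xb
    have a2 := sp1 Pu hPu y xb
    rw [← ha, k1] at a1
    rw [← hb, k3] at a2
    exact hasym _ _ _ ((hrev _ _).1 (a1.resolve_left (Ne.symm hc))) (a2.resolve_left (Ne.symm hc))
  have hT : (adjGraph D).IsTree := ⟨hG, ssc_acyclic hG F hu pp2 pp1 xb hxb1 hxb2⟩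
  refine ⟨adjGraph D, xb, hT, ?_, hG⟩
  intro P hP
  set p := peak P with hp
  have fixL : ∀ q c, c ∈ intv (adjGraph D) q xb → F c q = c := fun q c hc =>
    ssc_fixed_intv hG (pp1 q) (hu q) (hxb2 q) hc
  have fixR : ∀ q c, c ∈ intv (adjGraph D) q xb → F q c = c := fun q c hc =>
    ssc_fixed_intv hG (pp2 q) (hu q) (hxb1 q) hc
  have tri := fun a b c => hG.dist_triangle (u := a) (v := b) (w := c)
  have dc := fun a b => (adjGraph D).dist_comm (u := a) (v := b)
  refine ⟨?_, ?_⟩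
  · intro c d hc hd hcd hcpd
    rw [← hp] at hc hd hcpd
    have hdc : d ∈ intv (adjGraph D) c xb := by
      simp only [intv, Set.mem_ofPred_eq] at *
      have := tri p c xb
      have := tri c d xb
      omega
    have e1 := fixR p c hc
    have e2 := fixL c d hdc
    have := sp1 P hP d c
    rw [← hp, e1, e2] at this
    exact this.resolve_left hcd
  · intro c hc
    rw [← hp] at hc ⊢
    obtain ⟨h1, h2⟩ := ssc_projOn_spec hT p xb c
    set c' := projOn (adjGraph D) (intv (adjGraph D) p xb) c with hc'
    have hcp := h2 p (ssc_left_mem _ _ _)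
    have hcx := h2 xb (ssc_right_mem _ _ _)
    have e1 : F p c' = c' := fixR p c' h1
    have e2 : F c' c = c' := fixL c c' hcx
    have m1 : F p c ∈ intv (adjGraph D) p c' := ssc_value_intv hG (pp1 c) e2
    have m2 : F p c ∈ intv (adjGraph D) c c' := ssc_value_intv hG (pp2 p) e1
    have e : F p c = c' := by
      apply hG.dist_eq_zero_iff.1
      simp only [intv, Set.mem_ofPred_eq] at m1 m2 hcp
      have := tri c (F p c) p
      have := dc (F p c) p
      have := dc c' p
      omega
    have := sp1 P hP c c
    rw [← hp, e, hu] at this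
    refine this.resolve_left ?_
    intro e'
    rw [e'] at h1
    exact hc h1

/-! ### Projection rules -/

theorem ssc_intv_self {T : SimpleGraph A} (hT : T.IsTree) {x c : A} (h : c ∈ intv T x x) :
    c = x := by
  simp only [intv, Set.mem_ofPred_eq, SimpleGraph.dist_self] at h
  exact (hT.connected.dist_eq_zero_iff.1 (by omega : T.dist x c = 0)).symm

theorem ssc_gamma {T : SimpleGraph A} (hT : T.IsTree) (P : Fin 2 → Pref A) (i j : Fin 2)
    (hij : i ≠ j) : gammaSet T P = intv T (peak (P i)) (peak (P j)) := by
  ext c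
  constructor
  · rintro ⟨k, l, h⟩
    have hk : k = i ∨ k = j := by omega
    have hl : l = i ∨ l = j := by omega
    rcases hk with rfl | rfl <;> rcases hl with rfl | rfl
    · rw [ssc_intv_self hT h]; exact ssc_left_mem _ _ _
    · exact h
    · rw [ssc_intv_comm]; exact h
    · rw [ssc_intv_self hT h]; exact ssc_right_mem _ _ _
  · intro h
    exact ⟨i, j, h⟩

theorem ssc_ssp_key {T : SimpleGraph A} (hT : T.IsTree) (xb : A) (P : Pref A)
    (hP : SemiSP T xb P) (q r : A) :
    projOn T (intv T (peak P) q) xb = projOn T (intv T r q) xb ∨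
      prefers P (projOn T (intv T (peak P) q) xb) (projOn T (intv T r q) xb) := by
  obtain ⟨h1, h2⟩ := ssc_projOn_spec hT (peak P) q xb
  obtain ⟨h1', h2'⟩ := ssc_projOn_spec hT r q xb
  set m := projOn T (intv T (peak P) q) xb
  set m' := projOn T (intv T r q) xb
  obtain ⟨hs1, hs2⟩ := hP
  set p := peak P
  have hmp := h2 p (ssc_left_mem _ _ _)
  have hmq := h2 q (ssc_right_mem _ _ _)
  have hmq' := h2' q (ssc_right_mem _ _ _)
  rw [ssc_intv_comm] at hmp hmq hmq'
  have tri := fun a b c => hT.connected.dist_triangle (u := a) (v := b) (w := c)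
  have dc := fun a b => T.dist_comm (u := a) (v := b)
  have key : ∀ c, c ∈ intv T q m → c ∈ intv T p xb → c = m := by
    intro c hc hc'
    apply hT.connected.dist_eq_zero_iff.1
    simp only [intv, Set.mem_ofPred_eq] at hc hc' h1 hmp hmq
    have := tri p c q
    have := tri q c xb
    have := dc c q
    have := dc m q
    omega
  by_cases hne : m = m'
  · exact Or.inl hne
  right
  rcases ssc_split hT hmq hmq' with h | h
  · have hnot : m' ∉ intv T p xb := fun hc => hne (key _ h hc).symm
    have := hs2 m' hnot
    obtain ⟨g1, g2⟩ := ssc_projOn_spec hT p xb m'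
    have e := key (projOn T (intv T p xb) m') (ssc_convex hT h (ssc_right_mem _ _ _) (g2 m hmp)) g1
    rwa [e] at this
  · have a1 : m' ∈ intv T p xb := ssc_convex hT hmp (ssc_right_mem _ _ _) h
    refine hs1 m m' hmp a1 hne ?_
    simp only [intv, Set.mem_ofPred_eq] at a1 h hmp ⊢
    omega

theorem ssc_ssp_to_proj (D : Set (Pref A)) {T : SimpleGraph A} (hT : T.IsTree) (xb : A)
    (hD : D ⊆ {P | SemiSP T xb P}) :
    StrategyProof D (fun P : Fin 2 → Pref A => projRule T xb P) := by
  intro P hP i Q hQ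
  obtain ⟨j, hij⟩ : ∃ j : Fin 2, i ≠ j := ⟨1 - i, by fin_cases i <;> simp⟩
  simp only [projRule]
  rw [ssc_gamma hT P i j hij, ssc_gamma hT _ i j hij, Function.update_self,
    Function.update_of_ne hij.symm]
  exact ssc_ssp_key hT xb (P i) (hD (hP i)) _ _

theorem ssc_proj_to_rule (D : Set (Pref A)) {T : SimpleGraph A} (hT : T.IsTree) (xb : A)
    (hs : StrategyProof D (fun P : Fin 2 → Pref A => projRule T xb P)) (Pl Pu : Pref A) :
    ∃ f : (Fin 2 → Pref A) → A,
        IsRule D f ∧ TopsOnly D f ∧ StrategyProof D f ∧ f ![Pl, Pu] = f ![Pu, Pl] := by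
  have h01 : (0 : Fin 2) ≠ 1 := by decide
  refine ⟨fun P => projRule T xb P, ?_, ?_, hs, ?_⟩
  · intro P hP a ha
    simp only [projRule]
    rw [ssc_gamma hT P 0 1 h01, ha, ha]
    exact ssc_intv_self hT (ssc_projOn_spec hT a a xb).1
  · intro P P' _ _ h
    simp only [projRule]
    rw [ssc_gamma hT P 0 1 h01, ssc_gamma hT P' 0 1 h01, h, h]
  · simp only [projRule]
    rw [ssc_gamma hT _ 0 1 h01, ssc_gamma hT _ 1 0 h01.symm]
    simp

/-- on a non-dictatorial, unidimensional domain, existence of an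
invariant, tops-only and strategy-proof two-voter rule is equivalent to being a
semi-single-peaked domain, and to the existence of a strategy-proof two-voter
projection rule. -/
theorem stmt1_invariance_classification (D : Set (Pref A)) (hD : D.Nonempty)
    (hcard : 3 ≤ Fintype.card A) (huni : Unidimensional D)
    (hnd : ¬ DictatorialDomain D)
    (Pl Pu : Pref A) (hPl : Pl ∈ D) (hPu : Pu ∈ D) (hrev : Reversed Pl Pu) :
    ((∃ f : (Fin 2 → Pref A) → A,
        IsRule D f ∧ TopsOnly D f ∧ StrategyProof D f ∧ f ![Pl, Pu] = f ![Pu, Pl]) ↔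
      SemiSPDomain D) ∧
    ((∃ f : (Fin 2 → Pref A) → A,
        IsRule D f ∧ TopsOnly D f ∧ StrategyProof D f ∧ f ![Pl, Pu] = f ![Pu, Pl]) ↔
      ∃ (T : SimpleGraph A) (xbar : A), T.IsTree ∧
        StrategyProof D (fun P : Fin 2 → Pref A => projRule T xbar P)) := by
  have h12 : (∃ f : (Fin 2 → Pref A) → A,
      IsRule D f ∧ TopsOnly D f ∧ StrategyProof D f ∧ f ![Pl, Pu] = f ![Pu, Pl]) →
      SemiSPDomain D := by
    rintro ⟨f, hr, ht, hs, hinv⟩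
    exact ssc_rule_to_ssp D hcard huni.1 Pl Pu hPl hPu hrev f hr ht hs hinv
  have h23 : SemiSPDomain D → ∃ (T : SimpleGraph A) (xbar : A), T.IsTree ∧
      StrategyProof D (fun P : Fin 2 → Pref A => projRule T xbar P) := by
    rintro ⟨T, xb, hT, hsub, -⟩
    exact ⟨T, xb, hT, ssc_ssp_to_proj D hT xb hsub⟩
  have h31 : (∃ (T : SimpleGraph A) (xbar : A), T.IsTree ∧
      StrategyProof D (fun P : Fin 2 → Pref A => projRule T xbar P)) →
      ∃ f : (Fin 2 → Pref A) → A,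
        IsRule D f ∧ TopsOnly D f ∧ StrategyProof D f ∧ f ![Pl, Pu] = f ![Pu, Pl] := by
    rintro ⟨T, xb, hT, hs⟩
    exact ssc_proj_to_rule D hT xb hs Pl Pu
  exact ⟨⟨h12, fun h => h31 (h23 h)⟩, ⟨fun h => h23 (h12 h), h31⟩⟩
end

section
/- Let D be a non-dictatorial, unidimensional domain and let f : D^2 → A be an invariant, tops-only and strategy-proof rule. Then the adjacency graph G_∼ is a tree and f is the projection rule on G_∼ w.r.t. the alternative x* = f(P̲, P̄); in particular, every invariant, tops-only and strategy-proof two-voter rule on D is a projection rule. -/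
open Classical

set_option linter.unusedSectionVars false
set_option linter.unusedVariables false

variable {A : Type*} [Fintype A] [DecidableEq A] [Nonempty A]

/-- Abstract data: a two-voter tops-only rule on a connected graph. -/
structure AbsRule (G : SimpleGraph A) (F : A → A → A) (l u x : A) : Prop where
  conn : G.Connected
  unan : ∀ a, F a a = a
  e1 : ∀ a b c, G.Adj a b → F a c = F b c ∨ (F a c = a ∧ F b c = b)
  e2 : ∀ a b c, G.Adj a b → F c a = F c b ∨ (F c a = a ∧ F c b = b)
  lu : F l u = x
  ul : F u l = x
  sep1 : ∀ a, F a u = a → F a l = a → a = x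
  sep2 : ∀ a, F u a = a → F l a = a → a = x

namespace AbsRule

variable {G : SimpleGraph A} {F : A → A → A} {l u x : A}

theorem swap (h : AbsRule G F l u x) : AbsRule G (fun a b => F b a) l u x :=
  ⟨h.conn, h.unan, h.e2, h.e1, h.ul, h.lu, h.sep2, h.sep1⟩

theorem walkConst (h : AbsRule G F l u x) (c y : A) {a a' : A} (w : G.Walk a a')
    (hy : y ∉ w.support) (hF : F a c = y) : F a' c = y := by
  induction w with
  | nil => exact hF
  | cons hadj w ih =>
    simp only [SimpleGraph.Walk.support_cons, List.mem_cons, not_or] at hy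
    refine ih hy.2 ?_
    rcases h.e1 _ _ c hadj with h1 | h1
    · rw [← h1, hF]
    · exact absurd (hF.symm.trans h1.1) hy.1

theorem idemWalk (h : AbsRule G F l u x) (c : A) {a a' : A} (w : G.Walk a a')
    (hF : F a c = a') : F a' c = a' := by
  induction w with
  | nil => exact hF
  | cons hadj w ih =>
    rcases h.e1 _ _ c hadj with h1 | h1
    · exact ih (h1 ▸ hF)
    · have := h1.1.symm.trans hF
      subst this
      exact hF

theorem idem1 (h : AbsRule G F l u x) (a c : A) : F (F a c) c = F a c := by
  obtain ⟨w⟩ := h.conn.preconnected a (F a c)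
  exact h.idemWalk c w rfl

theorem idem2 (h : AbsRule G F l u x) (a c : A) : F c (F c a) = F c a := h.swap.idem1 a c

/-- The image of a walk under the retraction. -/
theorem imgWalk (h : AbsRule G F l u x) (c : A) {a a' : A} (w : G.Walk a a') :
    ∃ w' : G.Walk (F a c) (F a' c), ∀ z ∈ w'.support, F z c = z := by
  induction w with
  | nil => exact ⟨SimpleGraph.Walk.nil, by simp [h.idem1]⟩
  | @cons p q r hadj w ih =>
    obtain ⟨w', hw'⟩ := ih
    rcases h.e1 _ _ c hadj with h1 | h1
    · exact ⟨w'.copy h1.symm rfl, by simpa using hw'⟩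
    · refine ⟨SimpleGraph.Walk.cons (by rw [h1.1, h1.2]; exact hadj) w', ?_⟩
      intro z hz
      simp only [SimpleGraph.Walk.support_cons, List.mem_cons] at hz
      rcases hz with rfl | hz
      · exact h.idem1 _ _
      · exact hw' z hz

/-- If the retract contains a point besides `a`, it contains a neighbour of `a`. -/
theorem exNbr (h : AbsRule G F l u x) (c a b : A) (ha : F a c = a) (hb : F b c = b)
    (hab : a ≠ b) : ∃ z, G.Adj a z ∧ F z c = z := by
  obtain ⟨w⟩ := h.conn.preconnected a b
  obtain ⟨w', hw'⟩ := h.imgWalk c w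
  obtain ⟨w'', hw''⟩ : ∃ w'' : G.Walk a b, ∀ z ∈ w''.support, F z c = z :=
    ⟨w'.copy ha hb, by simpa using hw'⟩
  cases w'' with
  | nil => exact absurd rfl hab
  | cons hadj w => exact ⟨_, hadj, hw'' _ (by simp)⟩

theorem fx_u (h : AbsRule G F l u x) : F x u = x := by
  have := h.idem1 l u; rwa [h.lu] at this
theorem fx_l (h : AbsRule G F l u x) : F x l = x := by
  have := h.idem1 u l; rwa [h.ul] at this
theorem fu_x (h : AbsRule G F l u x) : F u x = x := h.swap.fx_u
theorem fl_x (h : AbsRule G F l u x) : F l x = x := h.swap.fx_l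

theorem noNbr (h : AbsRule G F l u x) (b : A) (hadj : G.Adj x b) : F x b ≠ b := by
  intro hb
  -- first: `F b x = x`
  have hbx : F b x = x := by
    rcases h.e1 x b u hadj with h1 | h1
    · have h2 : F b u = x := by rw [← h1, h.fx_u]
      have := h.idem2 u b; rwa [h2] at this
    · rcases h.e1 x b l hadj with h3 | h3
      · have h2 : F b l = x := by rw [← h3, h.fx_l]
        have := h.idem2 l b; rwa [h2] at this
      · exact absurd (h.sep1 b h1.2 h3.2).symm hadj.ne
  have key : ∀ v, F v x = x → F v b = b := by
    intro v hv
    rcases h.e2 x b v hadj with h1 | h1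
    · have h2 : F v b = x := by rw [← h1, hv]
      have := h.idem1 v b
      rw [h2, hb] at this
      exact absurd this.symm hadj.ne
    · exact h1.2
  exact hadj.ne (h.sep2 b (key u h.fu_x) (key l h.fl_x)).symm

theorem fx (h : AbsRule G F l u x) (c : A) : F x c = x := by
  by_contra hc
  obtain ⟨z, hz, hz'⟩ := h.swap.exNbr x x (F x c) (h.unan x) (h.idem2 c x) (Ne.symm hc)
  exact h.noNbr z hz hz'

theorem fx' (h : AbsRule G F l u x) (c : A) : F c x = x := h.swap.fx c

/-- `b ∈ Fix a` means `b` separates `a` from `x`. -/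
theorem cut (h : AbsRule G F l u x) {a b : A} (hb : F b a = b) (w : G.Walk a x) :
    b ∈ w.support := by
  by_contra hn
  have := h.swap.walkConst b b w hn hb
  have h2 : F b x = b := this
  rw [h.fx'] at h2
  exact hn (h2 ▸ w.end_mem_support)

theorem ofCut (h : AbsRule G F l u x) {a b : A} (hb : ∀ w : G.Walk a x, b ∈ w.support) :
    F b a = b := by
  obtain ⟨w⟩ := h.conn.preconnected a x
  obtain ⟨w', hw'⟩ := h.imgWalk a w
  exact hw' b (by simpa using hb (w'.copy (h.unan a) (h.fx a)))

theorem symm (h : AbsRule G F l u x) {a b : A} (hb : F b a = b) : F a b = b :=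
  h.swap.ofCut (fun w => h.cut hb w)

theorem symm' (h : AbsRule G F l u x) {a b : A} (hb : F a b = b) : F b a = b :=
  h.swap.symm hb

theorem parUniq (h : AbsRule G F l u x) {a b c : A} (hab : G.Adj a b) (hac : G.Adj a c)
    (hb : F b a = b) (hc : F c a = c) : b = c := by
  have hc' := h.symm hc
  have h1 : F b c = c := by
    rcases h.e1 a b c hab with h1 | h1
    · rw [← h1, hc']
    · exact absurd (h1.1.symm.trans hc') hac.ne
  have h2 : F b c = b := by
    rcases h.e2 a c b hac with h1 | h1
    · rw [← h1, hb]
    · exact absurd (h1.1.symm.trans hb) hab.ne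
  rw [← h2, h1]

theorem isTree (h : AbsRule G F l u x) : G.IsTree := by
  have hp : ∀ a, ∃ p, a ≠ x → G.Adj a p ∧ F p a = p := by
    intro a
    by_cases ha : a = x
    · exact ⟨a, fun h => absurd ha h⟩
    · obtain ⟨z, hz⟩ := h.exNbr a a x (h.unan a) (h.fx a) ha
      exact ⟨z, fun _ => hz⟩
  choose p hp using hp
  have hsub : G.edgeSet ⊆ Set.image (fun a => s(a, p a)) {a | a ≠ x} := by
    intro e
    induction e using Sym2.ind with
    | _ a c =>
      intro he
      have hadj : G.Adj a c := he
      rcases h.e1 a c c hadj with h1 | h1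
      · have hc : F a c = c := by rw [h1, h.unan]
        have hca := h.symm' hc
        have hax : a ≠ x := by
          rintro rfl
          rw [h.fx] at hc
          exact hadj.ne hc
        refine ⟨a, hax, ?_⟩
        have := h.parUniq (hp a hax).1 hadj (hp a hax).2 hca
        simp only [this]
      · have hcx : c ≠ x := by
          rintro rfl
          have := h1.1
          rw [h.fx'] at this
          exact hadj.ne this.symm
        refine ⟨c, hcx, ?_⟩
        have := h.parUniq (hp c hcx).1 hadj.symm (hp c hcx).2 h1.1
        simp only [this]
        exact Sym2.eq_swap
  rw [SimpleGraph.isTree_iff_connected_and_card]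
  refine ⟨h.conn, ?_⟩
  have hge := h.conn.card_vert_le_card_edgeSet_add_one
  have h1 : G.edgeSet.ncard ≤ {a : A | a ≠ x}.ncard :=
    (Set.ncard_le_ncard hsub (Set.toFinite _)).trans (Set.ncard_image_le (Set.toFinite _))
  have h2 : {a : A | a ≠ x}.ncard + 1 = Nat.card A := by
    have : {a : A | a ≠ x} = {x}ᶜ := by ext; simp
    rw [this, ← Set.ncard_singleton x, add_comm, Set.ncard_add_ncard_compl]
  have h3 : G.edgeSet.ncard = Nat.card G.edgeSet := rfl
  omega

theorem distMem (h : AbsRule G F l u x) {a b y : A}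
    (hy : ∀ w : G.Walk a b, y ∈ w.support) : G.dist a y + G.dist y b = G.dist a b := by
  obtain ⟨w, hw⟩ := h.conn.exists_walk_length_eq_dist a b
  have h1 := G.dist_le (w.takeUntil y (hy w))
  have h2 := G.dist_le (w.dropUntil y (hy w))
  have h3 := congrArg SimpleGraph.Walk.length (w.take_spec (hy w))
  rw [SimpleGraph.Walk.length_append] at h3
  have h4 := h.conn.dist_triangle (u := a) (v := y) (w := b)
  omega

theorem distMem' (h : AbsRule G F l u x) {a b y : A} (w : G.Walk a b)
    (hw : w.length = G.dist a b) (hy : y ∈ w.support) :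
    G.dist a y + G.dist y b = G.dist a b := by
  have h1 := G.dist_le (w.takeUntil y hy)
  have h2 := G.dist_le (w.dropUntil y hy)
  have h3 := congrArg SimpleGraph.Walk.length (w.take_spec hy)
  rw [SimpleGraph.Walk.length_append] at h3
  have h4 := h.conn.dist_triangle (u := a) (v := y) (w := b)
  omega

theorem memIntv (h : AbsRule G F l u x) (a b : A) : F a b ∈ intv G a b := by
  refine h.distMem fun w => ?_
  by_contra hn
  have := h.walkConst b (F a b) w hn rfl
  rw [h.unan] at this
  exact hn (this ▸ w.end_mem_support)

theorem proj (h : AbsRule G F l u x) (a b z : A) (hz : z ∈ intv G a b) :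
    F a b ∈ intv G x z := by
  set y := F a b with hy
  have ha : F y a = y := h.symm' (h.idem2 b a)
  have hb : F y b = y := h.idem1 a b
  have hyi : G.dist a y + G.dist y b = G.dist a b := h.memIntv a b
  have hz : G.dist a z + G.dist z b = G.dist a b := hz
  have key : G.dist z y + G.dist y x = G.dist z x := by
    by_cases hyz : y = z
    · rw [hyz]; simp
    refine h.distMem fun w => ?_
    obtain ⟨w1, hw1⟩ := h.conn.exists_walk_length_eq_dist a z
    obtain ⟨w2, hw2⟩ := h.conn.exists_walk_length_eq_dist b z
    have m1 := h.cut ha (w1.append w)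
    have m2 := h.cut hb (w2.append w)
    rw [SimpleGraph.Walk.mem_support_append_iff] at m1 m2
    rcases m1 with m1 | m1
    · rcases m2 with m2 | m2
      · have d1 := h.distMem' w1 hw1 m1
        have d2 := h.distMem' w2 hw2 m2
        have c1 : G.dist b z = G.dist z b := G.dist_comm
        have c2 : G.dist b y = G.dist y b := G.dist_comm
        have : G.dist y z = 0 := by omega
        exact absurd (h.conn.dist_eq_zero_iff.mp this) hyz
      · exact m2
    · exact m1
  show G.dist x y + G.dist y z = G.dist x z
  rw [G.dist_comm (u := x) (v := y), G.dist_comm (u := y) (v := z),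
    G.dist_comm (u := x) (v := z)]
  omega

theorem projOn_eq (h : AbsRule G F l u x) (B : Set A) (y : A) (hy : IsProjPt G B x y) :
    projOn G B x = y := by
  have hex : ∃ a', IsProjPt G B x a' := ⟨y, hy⟩
  unfold projOn
  rw [dif_pos hex]
  have hs := hex.choose_spec
  have h1 : G.dist x _ + G.dist _ y = G.dist x y := hs.2 y hy.1
  have h2 : G.dist x y + G.dist y _ = G.dist x _ := hy.2 _ hs.1
  apply h.conn.dist_eq_zero_iff.mp
  omega

theorem projRule_eq (h : AbsRule G F l u x) (P : Fin 2 → Pref A) :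
    F (peak (P 0)) (peak (P 1)) = projRule G x P := by
  symm
  refine h.projOn_eq _ _ ⟨⟨0, 1, h.memIntv _ _⟩, ?_⟩
  rintro z ⟨i, j, hz⟩
  apply h.proj
  have self : ∀ a, z ∈ intv G a a → z = a := by
    intro a hz
    have hz : G.dist a z + G.dist z a = G.dist a a := hz
    rw [SimpleGraph.dist_self] at hz
    exact h.conn.dist_eq_zero_iff.mp (by omega)
  fin_cases i <;> fin_cases j
  · rw [self _ hz]; simp [intv]
  · exact hz
  · have hz : G.dist (peak (P 1)) z + G.dist z (peak (P 0)) = G.dist (peak (P 1)) (peak (P 0)) := hz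
    show G.dist (peak (P 0)) z + G.dist z (peak (P 1)) = G.dist (peak (P 0)) (peak (P 1))
    rw [G.dist_comm (u := peak (P 0)) (v := z), G.dist_comm (u := z) (v := peak (P 1)),
      G.dist_comm (u := peak (P 0)) (v := peak (P 1)), ← hz, add_comm]
  · rw [self _ hz]; simp [intv]

end AbsRule

theorem swapPair (hcard : 3 ≤ Fintype.card A) {P P' : Pref A} {a b y z : A}
    (ha : peak P = a) (hb : second P = b) (hb' : peak P' = b) (ha' : second P' = a)
    (hr : ∀ k : ℕ, 2 ≤ k → rk P k = rk P' k)
    (h1 : prefers P y z) (h2 : prefers P' z y) : y = a ∧ z = b := by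
  have c0 : 0 < Fintype.card A := by omega
  have c1 : 1 < Fintype.card A := by omega
  simp only [peak, second, rk, c0, c1, dif_pos] at ha hb ha' hb'
  have hrr : ∀ i : Fin (Fintype.card A), 2 ≤ i.val → P i = P' i := by
    intro i hi
    have := hr i.val hi
    simpa [rk, i.isLt] using this
  obtain ⟨i, rfl⟩ := P.surjective y
  obtain ⟨j, rfl⟩ := P.surjective z
  simp only [prefers, Equiv.symm_apply_apply] at h1 h2
  have hlow : ∀ k : Fin (Fintype.card A), k.val < 2 → (P'.symm (P k)).val < 2 := by
    intro k hk
    rcases (by omega : k.val = 0 ∨ k.val = 1) with hk | hk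
    · have : k = ⟨0, c0⟩ := Fin.ext hk
      rw [this, ha, ← ha', Equiv.symm_apply_apply]; simp
    · have : k = ⟨1, c1⟩ := Fin.ext hk
      rw [this, hb, ← hb', Equiv.symm_apply_apply]; simp
  have hij : i.val < j.val := h1
  by_cases hj : 2 ≤ j.val
  · rw [hrr j hj, Equiv.symm_apply_apply] at h2
    have h2' : j.val < (P'.symm (P i)).val := h2
    by_cases hi : 2 ≤ i.val
    · rw [hrr i hi, Equiv.symm_apply_apply] at h2'
      omega
    · have := hlow i (by omega)
      omega
  · have hi0 : i = ⟨0, c0⟩ := Fin.ext (by show _ = (_ : ℕ); dsimp only; omega)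
    have hj1 : j = ⟨1, c1⟩ := Fin.ext (by show _ = (_ : ℕ); dsimp only; omega)
    rw [hi0, hj1]
    exact ⟨ha, hb⟩

/-- on a non-dictatorial, unidimensional domain, every invariant,
tops-only and strategy-proof two-voter rule makes the adjacency graph a tree and
is the projection rule on it w.r.t. `f(P̲, P̄)`; in particular it is a projection
rule. -/
theorem stmt2_invariant_rule_is_projection (D : Set (Pref A)) (hD : D.Nonempty)
    (hcard : 3 ≤ Fintype.card A) (huni : Unidimensional D)
    (hnd : ¬ DictatorialDomain D)
    (Pl Pu : Pref A) (hPl : Pl ∈ D) (hPu : Pu ∈ D) (hrev : Reversed Pl Pu)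
    (f : (Fin 2 → Pref A) → A) (hrule : IsRule D f) (hto : TopsOnly D f)
    (hsp : StrategyProof D f) (hinv : f ![Pl, Pu] = f ![Pu, Pl]) :
    (adjGraph D).IsTree ∧
    (∀ P : Fin 2 → Pref A, InDom D P → f P = projRule (adjGraph D) (f ![Pl, Pu]) P) ∧
    (∃ (T : SimpleGraph A) (xbar : A), T.IsTree ∧
      ∀ P : Fin 2 → Pref A, InDom D P → f P = projRule T xbar P) := by
  have hconn : (adjGraph D).Connected := huni.1
  have hnt : Nontrivial A := Fintype.one_lt_card_iff_nontrivial.mp (by omega)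
  have hpr : ∀ a, ∃ P ∈ D, peak P = a := by
    intro a
    obtain ⟨b, hb⟩ := hconn.preconnected.exists_adj_of_nontrivial a
    rw [adjGraph, SimpleGraph.fromRel_adj] at hb
    rcases hb.2 with ⟨P, hP, P', hP', h⟩ | ⟨P, hP, P', hP', h⟩
    · exact ⟨P, hP, h.1⟩
    · exact ⟨P', hP', h.2.2.1⟩
  choose pr hprD hprp using hpr
  have hF : ∀ P Q, P ∈ D → Q ∈ D → f ![P, Q] = f ![pr (peak P), pr (peak Q)] := by
    intro P Q hP hQ
    apply hto
    · intro i; fin_cases i <;> simp [hP, hQ]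
    · intro i; fin_cases i <;> simp [hprD]
    · intro i; fin_cases i <;> simp [hprp]
  have sp1 : ∀ P Q R, P ∈ D → Q ∈ D → R ∈ D →
      f ![P, Q] = f ![R, Q] ∨ prefers P (f ![P, Q]) (f ![R, Q]) := by
    intro P Q R hP hQ hR
    have := hsp ![P, Q] (by intro i; fin_cases i <;> simp [hP, hQ]) 0 R hR
    have e : Function.update ![P, Q] 0 R = ![R, Q] := by
      funext i; fin_cases i <;> simp [Function.update]
    rw [e] at this
    exact this
  have sp2 : ∀ P Q R, P ∈ D → Q ∈ D → R ∈ D →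
      f ![P, Q] = f ![P, R] ∨ prefers Q (f ![P, Q]) (f ![P, R]) := by
    intro P Q R hP hQ hR
    have := hsp ![P, Q] (by intro i; fin_cases i <;> simp [hP, hQ]) 1 R hR
    have e : Function.update ![P, Q] 1 R = ![P, R] := by
      funext i; fin_cases i <;> simp [Function.update]
    rw [e] at this
    exact this
  have hE1 : ∀ a b c, DomAdjacent D a b → f ![pr a, pr c] = f ![pr b, pr c] ∨
      (f ![pr a, pr c] = a ∧ f ![pr b, pr c] = b) := by
    rintro a b c ⟨P, hP, P', hP', ha, hb, hb', ha', hr⟩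
    have q1 := sp1 P (pr c) P' hP (hprD c) hP'
    have q2 := sp1 P' (pr c) P hP' (hprD c) hP
    rw [hF P _ hP (hprD c), hF P' _ hP' (hprD c), ha, hb', hprp] at q1 q2
    rcases q1 with q1 | q1
    · exact Or.inl q1
    rcases q2 with q2 | q2
    · exact Or.inl q2.symm
    exact Or.inr (swapPair hcard ha hb hb' ha' hr q1 q2)
  have hE2 : ∀ a b c, DomAdjacent D a b → f ![pr c, pr a] = f ![pr c, pr b] ∨
      (f ![pr c, pr a] = a ∧ f ![pr c, pr b] = b) := by
    rintro a b c ⟨P, hP, P', hP', ha, hb, hb', ha', hr⟩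
    have q1 := sp2 (pr c) P P' (hprD c) hP hP'
    have q2 := sp2 (pr c) P' P (hprD c) hP' hP
    rw [hF _ P (hprD c) hP, hF _ P' (hprD c) hP', ha, hb', hprp] at q1 q2
    rcases q1 with q1 | q1
    · exact Or.inl q1
    rcases q2 with q2 | q2
    · exact Or.inl q2.symm
    exact Or.inr (swapPair hcard ha hb hb' ha' hr q1 q2)
  have habs : AbsRule (adjGraph D) (fun a b => f ![pr a, pr b]) (peak Pl) (peak Pu)
      (f ![Pl, Pu]) := by
    refine ⟨hconn, ?_, ?_, ?_, ?_, ?_, ?_, ?_⟩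
    · intro a
      apply hrule
      · intro i; fin_cases i <;> simp [hprD]
      · intro i; fin_cases i <;> simp [hprp]
    · intro a b c hab
      rw [adjGraph, SimpleGraph.fromRel_adj] at hab
      rcases hab.2 with h | h
      · exact hE1 a b c h
      · rcases hE1 b a c h with h | h
        · exact Or.inl h.symm
        · exact Or.inr ⟨h.2, h.1⟩
    · intro a b c hab
      rw [adjGraph, SimpleGraph.fromRel_adj] at hab
      rcases hab.2 with h | h
      · exact hE2 a b c h
      · rcases hE2 b a c h with h | h
        · exact Or.inl h.symm
        · exact Or.inr ⟨h.2, h.1⟩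
    · exact (hF Pl Pu hPl hPu).symm
    · exact (hF Pu Pl hPu hPl).symm.trans hinv.symm
    · intro a h1 h2
      have q1 := sp1 Pl Pu (pr a) hPl hPu (hprD a)
      have q2 := sp1 Pu Pl (pr a) hPu hPl (hprD a)
      rw [hF (pr a) Pu (hprD a) hPu, hprp] at q1
      rw [hF (pr a) Pl (hprD a) hPl, hprp, ← hinv] at q2
      rw [h1] at q1
      rw [h2] at q2
      rcases q1 with q1 | q1
      · exact q1.symm
      rcases q2 with q2 | q2
      · exact q2.symm
      exact absurd ((hrev _ _).mp q1) (lt_asymm q2)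
    · intro a h1 h2
      have q1 := sp2 Pu Pl (pr a) hPu hPl (hprD a)
      have q2 := sp2 Pl Pu (pr a) hPl hPu (hprD a)
      rw [hF Pu (pr a) hPu (hprD a), hprp, ← hinv] at q1
      rw [hF Pl (pr a) hPl (hprD a), hprp] at q2
      rw [h1] at q1
      rw [h2] at q2
      rcases q1 with q1 | q1
      · exact q1.symm
      rcases q2 with q2 | q2
      · exact q2.symm
      exact absurd ((hrev _ _).mp q1) (lt_asymm q2)
  have hproj : ∀ P : Fin 2 → Pref A, InDom D P →
      f P = projRule (adjGraph D) (f ![Pl, Pu]) P := by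
    intro P hP
    rw [← habs.projRule_eq P]
    have : P = ![P 0, P 1] := by ext i; fin_cases i <;> rfl
    conv_lhs => rw [this]
    exact hF _ _ (hP 0) (hP 1)
  exact ⟨habs.isTree, hproj, adjGraph D, f ![Pl, Pu], habs.isTree, hproj⟩
end
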